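/- arXiv:math/0611310 — 2 statements merged into one kernel-verified Lean document; each statement's English description precedes it below -/
import Mathlib

section
/- Let (A,ω,τ,G) be an ergodic C*-dynamical system (with K = G a group) with ω tracial, such that the product map p : G × G → G, (g,h) ↦ gh, is measurable and (g,h) ↦ ω(τ_h(a₁) τ_g(a₂) τ_{gh}(a₃) τ_g(a₄) τ_h(a₅)) is (Σ × Σ)-measurable for all a₁,...,a₅ ∈ A. Let (Λ_{1α}) and (Λ_{2α}) be Følner nets in G, indexed by the same directed set, such that (Λ_{1α}⁻¹Λ_{1α}) and (Λ_{2α}⁻¹Λ_{2α}) are also Følner nets in G. Fix a GNS representation of (A,ω) and a, b, c ∈ A with at least one of ι(a), ι(b), ι(c*) in H_v; set x_{g,h} := ι(τ_{gh}(a) τ_g(b) τ_h(c)) and γ_{g',h'} := lim_α (1/(μ(Λ_{1α})μ(Λ_{2α}))) ∫_{Λ_{1α}} ∫_{Λ_{2α}} ⟨x_{g,h}, x_{gg',hh'}⟩ dg dh. If (A,ω,τ,G) is uniformly asymptotically abelian with respect to (Λ_{1α}), then lim_α sup_{g₁,g₂ ∈ G} | (1/(μ(Λ_{1α})μ(Λ_{2α})))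 ∫_{Λ_{1α}g₁} ∫_{Λ_{2α}g₂} ⟨x_{g,h}, x_{gg',hh'}⟩ dg dh − γ_{g',h'} | = 0 for all g', h' ∈ G. -/
open Filter Topology
open scoped Pointwise ComplexOrder

/-- A Følner net in a (sub)semigroup `K` of a measure group `(G, Σ, μ)`. -/
structure FolnerNetIn {G : Type*} [Group G] [MeasurableSpace G]
    (μ : MeasureTheory.Measure G) (K : Set G) where
  idx : Type
  [pre : Preorder idx]
  [ne : Nonempty idx]
  [dir : IsDirected idx (· ≤ ·)]
  Lam : idx → Set G
  meas : ∀ α, MeasurableSet (Lam α) ∧ Lam α ⊆ K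
  fin : ∀ᶠ α in atTop, 0 < μ (Lam α) ∧ μ (Lam α) < ⊤
  folner : ∀ g ∈ K, Tendsto
    (fun α => (μ (symmDiff (Lam α) (Lam α * {g}))).toReal / (μ (Lam α)).toReal)
    atTop (𝓝 0)

attribute [instance] FolnerNetIn.pre FolnerNetIn.ne FolnerNetIn.dir

open MeasureTheory

/-- Ergodicity of `(A, ω, τ, G)` along a Følner net. -/
def FolnerNetIn.ErgodicAlong
    {A : Type*} [NormedRing A] [StarRing A] [CStarRing A] [NormedAlgebra ℂ A]
    [CompleteSpace A] [StarModule ℂ A]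
    {G : Type*} [CommGroup G] [MeasurableSpace G] {μ : Measure G} {K : Set G}
    (F : FolnerNetIn μ K) (ω : A →ₗ[ℂ] ℂ) (τ : G → A ≃⋆ₐ[ℂ] A) : Prop :=
  ∀ a b : A,
    Tendsto (fun α => (μ (F.Lam α)).toReal⁻¹ • ∫ g in F.Lam α, ω (a * τ g b) ∂μ)
      atTop (𝓝 (ω a * ω b))

/-- The space `H_v` of flight vectors: the orthogonal complement of the closed span `H₀` of
the unimodular eigenvectors of the semigroup `S = {U g : g ∈ G}` of contractions. -/
noncomputable def flightVectors {G H : Type*} [NormedAddCommGroup H]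
    [InnerProductSpace ℂ H] (U : G → H →L[ℂ] H) : Submodule ℂ H :=
  ((Submodule.span ℂ {x : H | x ≠ 0 ∧ ∃ lam : G → ℂ,
      ∀ g, ‖lam g‖ = 1 ∧ U g x = lam g • x}).topologicalClosure)ᗮ

section helpers

lemma aux_cstar_bound {A : Type*} [NormedRing A] [StarRing A] [CStarRing A] [NormedAlgebra ℂ A]
    [CompleteSpace A] [StarModule ℂ A]
    (ω : A →ₗ[ℂ] ℂ) (hω_pos : ∀ a : A, 0 ≤ ω (star a * a)) (hω_one : ω 1 = 1) (x : A) :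
    (ω (star x * x)).re ≤ ‖x‖ ^ 2 := by
  let : CStarAlgebra A := {}
  let := CStarAlgebra.spectralOrder A
  have := CStarAlgebra.spectralOrderedRing A
  have h := CStarAlgebra.star_mul_le_algebraMap_norm_sq (a := x)
  rw [← sub_nonneg, CStarAlgebra.nonneg_iff_eq_star_mul_self] at h
  obtain ⟨y, hy⟩ := h
  have h1 := hω_pos y
  rw [← hy, map_sub] at h1
  have h2 : ω (algebraMap ℝ A (‖x‖ ^ 2)) = ((‖x‖ ^ 2 : ℝ) : ℂ) := by
    rw [IsScalarTower.algebraMap_apply ℝ ℂ A, Algebra.algebraMap_eq_smul_one, map_smul, hω_one]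
    simp
  rw [h2] at h1
  have h3 := (Complex.le_def.1 h1).1
  simp only [Complex.zero_re, Complex.sub_re, Complex.ofReal_re] at h3
  linarith

lemma aux_norm_aut {A : Type*} [NormedRing A] [StarRing A] [CStarRing A] [NormedAlgebra ℂ A]
    [CompleteSpace A] [StarModule ℂ A] (φ : A ≃⋆ₐ[ℂ] A) (x : A) : ‖φ x‖ ≤ ‖x‖ := by
  let : CStarAlgebra A := {}
  exact NonUnitalStarAlgHom.norm_apply_le φ x

variable {G : Type*} [CommGroup G] [MeasurableSpace G] {μ : Measure G}

lemma aux_shift_meas (hTrans : ∀ (V : Set G) (g : G), MeasurableSet V → MeasurableSet (V * {g}))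
    (k : G) : Measurable (fun g : G => g * k) := by
  intro V hV
  have : (fun g : G => g * k) ⁻¹' V = V * {k⁻¹} := by
    rw [Set.mul_singleton]; ext g; simp
  rw [this]; exact hTrans _ _ hV

lemma aux_shift (hTrans : ∀ (V : Set G) (g : G), MeasurableSet V → MeasurableSet (V * {g}))
    (hRight : ∀ (V : Set G) (g : G), MeasurableSet V → μ (V * {g}) = μ V)
    {E : Type*} [NormedAddCommGroup E] [NormedSpace ℝ E] (f : G → E) (Λ : Set G) (k : G) :
    ∫ g in Λ * {k}, f g ∂μ = ∫ g in Λ, f (g * k) ∂μ := by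
  let e : G ≃ᵐ G := ⟨Equiv.mulRight k, aux_shift_meas hTrans k, aux_shift_meas hTrans k⁻¹⟩
  have hee : ∀ g, e g = g * k := fun _ => rfl
  have he : MeasurePreserving e μ μ := by
    refine ⟨e.measurable, ?_⟩
    ext V hV
    rw [Measure.map_apply e.measurable hV]
    have : e ⁻¹' V = V * {k⁻¹} := by
      rw [Set.mul_singleton]; ext g; simp [hee]
    rw [this, hRight _ _ hV]
  have h := he.setIntegral_preimage_emb e.measurableEmbedding f (Λ * {k})
  have h2 : e ⁻¹' (Λ * {k}) = Λ := by
    rw [Set.mul_singleton]; ext g; simp [hee]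
  rw [h2] at h
  exact h.symm

lemma aux_symmDiff (S T : Set G) (hS : MeasurableSet S) (hT : MeasurableSet T)
    (hS' : μ S < ⊤) (hT' : μ T < ⊤) (f : G → ℂ) (hf : Measurable f) (M : ℝ)
    (hM : ∀ g, ‖f g‖ ≤ M) :
    ‖(∫ g in T, f g ∂μ) - ∫ g in S, f g ∂μ‖ ≤ M * (μ (symmDiff S T)).toReal := by
  have hi : ∀ S : Set G, μ S < ⊤ → IntegrableOn f S μ := fun S hS =>
    Measure.integrableOn_of_bounded hS.ne hf.aestronglyMeasurable (M := M)
      (Eventually.of_forall hM)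
  have hD : MeasurableSet (symmDiff S T) := hS.symmDiff hT
  have hD' : μ (symmDiff S T) < ⊤ :=
    lt_of_le_of_lt (measure_mono (t := S ∪ T) (by
      intro x hx; rcases hx with h | h; exacts [Or.inl h.1, Or.inr h.1]))
      (measure_union_lt_top hS' hT')
  rw [← integral_indicator hS, ← integral_indicator hT,
    ← integral_sub ((hi T hT').integrable_indicator hT) ((hi S hS').integrable_indicator hS)]
  have h := norm_integral_le_of_norm_le (μ := μ)
    (f := fun g => T.indicator f g - S.indicator f g)
    (g := (symmDiff S T).indicator (fun _ => M))
    ((integrableOn_const hD'.ne).integrable_indicator hD)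
    (Eventually.of_forall (by
      intro g
      by_cases h1 : g ∈ S <;> by_cases h2 : g ∈ T <;>
        simp [h1, h2, Set.mem_symmDiff, hM g]))
  refine h.trans (le_of_eq ?_)
  rw [integral_indicator hD, setIntegral_const, smul_eq_mul, mul_comm]; rfl

/-- Uniform mean ergodic property for a vector `x`. -/
def AuxQ {H : Type*} [NormedAddCommGroup H] [InnerProductSpace ℂ H] (μ : Measure G)
    {ι : Type*} [Preorder ι] (Λ : ι → Set G) (U : G → H →L[ℂ] H) (e : H) (s : G →* G)
    (x : H) : Prop :=
  ∀ ε > (0 : ℝ), ∀ᶠ α in atTop, ∀ (k : G) (y : H),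
    ‖(∫ g in Λ α, (inner ℂ y (U (k * s g) x) : ℂ) ∂μ)
      - ((μ (Λ α)).toReal : ℂ) * (inner ℂ e x * inner ℂ y e)‖ ≤ ε * (μ (Λ α)).toReal * ‖y‖

lemma aux_uniform
    (hTrans : ∀ (V : Set G) (g : G), MeasurableSet V → MeasurableSet (V * {g}))
    (hRight : ∀ (V : Set G) (g : G), MeasurableSet V → μ (V * {g}) = μ V)
    {ι : Type*} [Preorder ι]
    (Λ : ι → Set G) (hΛ : ∀ α, MeasurableSet (Λ α))
    (hfin : ∀ᶠ α in atTop, 0 < μ (Λ α) ∧ μ (Λ α) < ⊤)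
    (hfol : ∀ g : G, Tendsto
      (fun α => (μ (symmDiff (Λ α) (Λ α * {g}))).toReal / (μ (Λ α)).toReal) atTop (𝓝 0))
    {H : Type*} [NormedAddCommGroup H] [InnerProductSpace ℂ H] [CompleteSpace H]
    (U : G → H →L[ℂ] H) (hUmul : ∀ g h x, U g (U h x) = U (g * h) x)
    (hUn : ∀ g x, ‖U g x‖ ≤ ‖x‖) (e : H) (he : ‖e‖ = 1) (hUe : ∀ g, U g e = e)
    (heU : ∀ g v, (inner ℂ e (U g v) : ℂ) = inner ℂ e v)
    (hmeas : ∀ k x y, Measurable fun g : G => (inner ℂ y (U (k * g) x) : ℂ))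
    (herg : ∀ z : H, (∀ k v, (inner ℂ z (U k v) : ℂ) = inner ℂ z v) →
      (inner ℂ z e : ℂ) = 0 → z = 0)
    (s : G →* G) (hs : Measurable s) (hsurj : Function.Surjective s) (x : H) :
    AuxQ μ Λ U e s x := by
  have hm : ∀ k x y, Measurable fun g : G => (inner ℂ y (U (k * s g) x) : ℂ) :=
    fun k x y => (hmeas k x y).comp hs
  have hb : ∀ k x y (g : G), ‖(inner ℂ y (U (k * s g) x) : ℂ)‖ ≤ ‖y‖ * ‖x‖ := fun k x y g =>
    (norm_inner_le_norm _ _).trans (mul_le_mul_of_nonneg_left (hUn _ _) (norm_nonneg _))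
  have hi : ∀ k x y α, μ (Λ α) < ⊤ →
      IntegrableOn (fun g : G => (inner ℂ y (U (k * s g) x) : ℂ)) (Λ α) μ := fun k x y α h =>
    Measure.integrableOn_of_bounded h.ne (hm k x y).aestronglyMeasurable (M := ‖y‖ * ‖x‖)
      (Eventually.of_forall (hb k x y))
  have hn : ∀ (x y : H), ‖(inner ℂ e x * inner ℂ y e : ℂ)‖ ≤ ‖y‖ * ‖x‖ := by
    intro x y
    rw [norm_mul]
    have h1 : ‖(inner ℂ e x : ℂ)‖ ≤ ‖x‖ := by simpa [he] using norm_inner_le_norm (𝕜 := ℂ) e x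
    have h2 : ‖(inner ℂ y e : ℂ)‖ ≤ ‖y‖ := by simpa [he] using norm_inner_le_norm (𝕜 := ℂ) y e
    rw [mul_comm]
    gcongr
  set W : Set H := {x | x = e ∨ ∃ k v, x = U k v - v} with hW
  have htop : (Submodule.span ℂ W).topologicalClosure = ⊤ := by
    rw [Submodule.topologicalClosure_eq_top_iff, Submodule.eq_bot_iff]
    intro z hz
    rw [Submodule.mem_orthogonal'] at hz
    refine herg z (fun k v => ?_) (hz e (Submodule.subset_span (Or.inl rfl)))
    have := hz (U k v - v) (Submodule.subset_span (Or.inr ⟨k, v, rfl⟩))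
    rwa [inner_sub_right, sub_eq_zero] at this
  have hspan : ∀ x ∈ Submodule.span ℂ W, AuxQ μ Λ U e s x := by
    intro x hx
    induction hx using Submodule.span_induction with
    | mem x hx =>
      rcases hx with rfl | ⟨k', v, rfl⟩
      · intro ε hε
        filter_upwards [hfin] with α hα k y
        simp only [hUe, setIntegral_const, inner_self_eq_norm_sq_to_K, he]
        simp [Measure.real]
        positivity
      · obtain ⟨k', rfl⟩ := hsurj k'
        intro ε hε
        have hv : 0 < ‖v‖ + 1 := by positivity
        filter_upwards [hfin, (hfol k').eventually (gt_mem_nhds (div_pos hε hv))] with α hα h1 k y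
        have hpos : 0 < (μ (Λ α)).toReal := ENNReal.toReal_pos hα.1.ne' hα.2.ne
        have h2 := aux_symmDiff (μ := μ) (Λ α) (Λ α * {k'}) (hΛ α) (hTrans _ _ (hΛ α)) hα.2
          (by rw [hRight _ _ (hΛ α)]; exact hα.2) _ (hm k v y) _ (hb k v y)
        rw [aux_shift hTrans hRight] at h2
        have h3 : ∀ g, (inner ℂ y (U (k * s g) (U (s k') v - v)) : ℂ)
            = inner ℂ y (U (k * s (g * k')) v) - inner ℂ y (U (k * s g) v) := by
          intro g
          rw [map_sub, inner_sub_right, hUmul, map_mul, mul_assoc]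
        have hi' : IntegrableOn (fun g : G => (inner ℂ y (U (k * s (g * k')) v) : ℂ)) (Λ α) μ := by
          have := hi (k * s k') v y α hα.2
          refine this.congr (Eventually.of_forall fun g => ?_)
          simp only [map_mul]
          rw [mul_assoc, mul_comm (s k')]
        simp only [h3]
        rw [integral_sub hi' (hi k v y α hα.2), inner_sub_right, heU]
        simp only [sub_self, zero_mul, mul_zero, sub_zero]
        refine h2.trans ?_
        rw [div_lt_div_iff₀ hpos hv] at h1
        have : ‖v‖ * (μ (symmDiff (Λ α) (Λ α * {k'}))).toReal ≤ ε * (μ (Λ α)).toReal := by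
          have : 0 ≤ (μ (symmDiff (Λ α) (Λ α * {k'}))).toReal := ENNReal.toReal_nonneg
          nlinarith
        calc _ = (‖v‖ * (μ (symmDiff (Λ α) (Λ α * {k'}))).toReal) * ‖y‖ := by ring
          _ ≤ _ := by gcongr
    | zero =>
      intro ε hε
      filter_upwards with α k y
      simp
      positivity
    | add x₁ x₂ _ _ h1 h2 =>
      intro ε hε
      filter_upwards [hfin, h1 (ε / 2) (half_pos hε), h2 (ε / 2) (half_pos hε)] with α hα h1 h2 k y
      have h3 : ∀ g, (inner ℂ y (U (k * s g) (x₁ + x₂)) : ℂ)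
            = inner ℂ y (U (k * s g) x₁) + inner ℂ y (U (k * s g) x₂) := by
        intro g; rw [map_add, inner_add_right]
      simp only [h3]
      rw [integral_add (hi k x₁ y α hα.2) (hi k x₂ y α hα.2), inner_add_right]
      refine le_trans (le_of_eq ?_) ((norm_add_le _ _).trans
        ((add_le_add (h1 k y) (h2 k y)).trans (le_of_eq ?_)))
      · congr 1; ring
      · ring
    | smul t x _ h1 =>
      intro ε hε
      have ht : 0 < ‖t‖ + 1 := by positivity
      filter_upwards [h1 (ε / (‖t‖ + 1)) (by positivity)] with α h1 k y
      have h3 : ∀ g, (inner ℂ y (U (k * s g) (t • x)) : ℂ)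
            = t * inner ℂ y (U (k * s g) x) := by
        intro g; rw [map_smul, inner_smul_right]
      simp only [h3]
      rw [integral_const_mul, inner_smul_right]
      have h4 := mul_le_mul_of_nonneg_left (h1 k y) (norm_nonneg t)
      rw [← norm_mul] at h4
      refine le_trans (le_of_eq ?_) (h4.trans ?_)
      · congr 1; ring
      · have : ‖t‖ * (ε / (‖t‖ + 1)) ≤ ε := by
          rw [mul_div_assoc', div_le_iff₀ ht]; nlinarith
        calc _ = (‖t‖ * (ε / (‖t‖ + 1))) * ((μ (Λ α)).toReal * ‖y‖) := by ring
          _ ≤ ε * ((μ (Λ α)).toReal * ‖y‖) := by gcongr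
          _ = _ := by ring
  -- closure
  intro ε hε
  have hx : x ∈ closure (Submodule.span ℂ W : Set H) := by
    rw [← Submodule.topologicalClosure_coe, htop]; trivial
  obtain ⟨x', hx', hd⟩ := Metric.mem_closure_iff.1 hx (ε / 3) (by positivity)
  rw [dist_eq_norm] at hd
  filter_upwards [hfin, hspan x' hx' (ε / 3) (by positivity)] with α hα h1 k y
  have h2 := h1 k y
  have h3 : ‖(∫ g in Λ α, (inner ℂ y (U (k * s g) x) : ℂ) ∂μ)
      - ∫ g in Λ α, (inner ℂ y (U (k * s g) x') : ℂ) ∂μ‖ ≤ ‖y‖ * (ε / 3) * (μ (Λ α)).toReal := by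
    rw [← integral_sub (hi k x y α hα.2) (hi k x' y α hα.2)]
    refine norm_setIntegral_le_of_norm_le_const hα.2 (fun g _ => ?_)
    rw [← inner_sub_right, ← map_sub]
    exact (hb k (x - x') y g).trans (by gcongr)
  have h4 : ‖((μ (Λ α)).toReal : ℂ) * (inner ℂ e x' * inner ℂ y e)
      - ((μ (Λ α)).toReal : ℂ) * (inner ℂ e x * inner ℂ y e)‖
      ≤ (μ (Λ α)).toReal * (‖y‖ * (ε / 3)) := by
    rw [← mul_sub, ← sub_mul, ← inner_sub_right, norm_mul]
    have : ‖((μ (Λ α)).toReal : ℂ)‖ = (μ (Λ α)).toReal := by simp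
    rw [this]
    rw [norm_sub_rev] at hd
    gcongr
    exact (hn (x' - x) y).trans (by gcongr)
  calc _ = _ := congrArg norm (by ring)
    _ ≤ _ := (norm_add₃_le (a := _) (b := _) (c := _)).trans
        (add_le_add (add_le_add h3 h2) h4)
    _ = _ := by ring

end helpers

set_option maxHeartbeats 4000000 in
/-- **Lemma 5.3(2).** -/
theorem lemma_5_3_2
    -- a unital C*-algebra A
    {A : Type*} [NormedRing A] [StarRing A] [CStarRing A] [NormedAlgebra ℂ A]
    [CompleteSpace A] [StarModule ℂ A]
    -- a tracial state ω on A
    (ω : A →ₗ[ℂ] ℂ) (hω_pos : ∀ a : A, 0 ≤ ω (star a * a)) (hω_one : ω 1 = 1)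
    (hω_tracial : ∀ a b : A, ω (a * b) = ω (b * a))
    -- a right invariant measure group (G, Σ, μ) with G abelian
    {G : Type*} [CommGroup G] [MeasurableSpace G] (μ : Measure G)
    (hTrans : ∀ (V : Set G) (g : G), MeasurableSet V → MeasurableSet (V * {g}))
    (hRight : ∀ (V : Set G) (g : G), MeasurableSet V → μ (V * {g}) = μ V)
    (hInvMeas : Measurable (fun g : G => g⁻¹))
    (hInvInv : ∀ V : Set G, MeasurableSet V → μ V⁻¹ = μ V)
    -- the product map p : G × G → G is measurable
    (hProdMeas : Measurable fun q : G × G => q.1 * q.2)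
    -- the action τ, making (A, ω, τ, G) a C*-dynamical system (here K = G)
    (τ : G → A ≃⋆ₐ[ℂ] A)
    (hτ_one : ∀ a : A, τ 1 a = a)
    (hτ_mul : ∀ g h a, τ g (τ h a) = τ (g * h) a)
    (hω_inv : ∀ g a, ω (τ g a) = ω a)
    (hτ_meas : ∀ a b : A, Measurable fun g : G => ω (a * τ g b))
    -- g ↦ ‖[a, τ_g(b)]‖ is measurable
    (hcomm_meas : ∀ a b : A, Measurable fun g : G => ‖a * τ g b - τ g b * a‖)
    -- the system is ergodic (w.r.t. some, equivalently every, Følner net in G)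
    (hErg : ∃ F : FolnerNetIn μ (Set.univ : Set G), F.ErgodicAlong ω τ)
    -- (g,h) ↦ ω(τ_h(a₁) τ_g(a₂) τ_{gh}(a₃) τ_g(a₄) τ_h(a₅)) is (Σ × Σ)-measurable
    (hmeas5 : ∀ a₁ a₂ a₃ a₄ a₅ : A, Measurable fun q : G × G =>
      ω (τ q.2 a₁ * τ q.1 a₂ * τ (q.1 * q.2) a₃ * τ q.1 a₄ * τ q.2 a₅))
    -- Følner nets (Λ1 α), (Λ2 α) in G indexed by the same directed set
    {ι : Type*} [Preorder ι] [Nonempty ι] [IsDirected ι (· ≤ ·)]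
    (Λ1 Λ2 : ι → Set G)
    (hΛ1 : ∀ α, MeasurableSet (Λ1 α))
    (hΛ1fin : ∀ᶠ α in atTop, 0 < μ (Λ1 α) ∧ μ (Λ1 α) < ⊤)
    (hΛ1folner : ∀ g : G, Tendsto
      (fun α => (μ (symmDiff (Λ1 α) (Λ1 α * {g}))).toReal / (μ (Λ1 α)).toReal) atTop (𝓝 0))
    (hΛ2 : ∀ α, MeasurableSet (Λ2 α))
    (hΛ2fin : ∀ᶠ α in atTop, 0 < μ (Λ2 α) ∧ μ (Λ2 α) < ⊤)
    (hΛ2folner : ∀ g : G, Tendsto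
      (fun α => (μ (symmDiff (Λ2 α) (Λ2 α * {g}))).toReal / (μ (Λ2 α)).toReal) atTop (𝓝 0))
    -- the nets (Λ1 α⁻¹ Λ1 α) and (Λ2 α⁻¹ Λ2 α) are also Følner in G
    (hΛ1inv : ∀ᶠ α in atTop, MeasurableSet ((Λ1 α)⁻¹ * Λ1 α))
    (hΛ1invfin : ∀ᶠ α in atTop, 0 < μ ((Λ1 α)⁻¹ * Λ1 α) ∧ μ ((Λ1 α)⁻¹ * Λ1 α) < ⊤)
    (hΛ1invfolner : ∀ g : G, Tendsto
      (fun α => (μ (symmDiff ((Λ1 α)⁻¹ * Λ1 α) (((Λ1 α)⁻¹ * Λ1 α) * {g}))).toReal /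
        (μ ((Λ1 α)⁻¹ * Λ1 α)).toReal) atTop (𝓝 0))
    (hΛ2inv : ∀ᶠ α in atTop, MeasurableSet ((Λ2 α)⁻¹ * Λ2 α))
    (hΛ2invfin : ∀ᶠ α in atTop, 0 < μ ((Λ2 α)⁻¹ * Λ2 α) ∧ μ ((Λ2 α)⁻¹ * Λ2 α) < ⊤)
    (hΛ2invfolner : ∀ g : G, Tendsto
      (fun α => (μ (symmDiff ((Λ2 α)⁻¹ * Λ2 α) (((Λ2 α)⁻¹ * Λ2 α) * {g}))).toReal /
        (μ ((Λ2 α)⁻¹ * Λ2 α)).toReal) atTop (𝓝 0))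
    -- a GNS representation (H, j) of (A, ω), with U the GNS representation of τ
    {H : Type*} [NormedAddCommGroup H] [InnerProductSpace ℂ H] [CompleteSpace H]
    (j : A →ₗ[ℂ] H) (hj_dense : DenseRange j)
    (hj_inner : ∀ a b : A, (inner ℂ (j a) (j b) : ℂ) = ω (star a * b))
    (U : G → H →L[ℂ] H) (hU : ∀ g a, U g (j a) = j (τ g a)) (hU_contr : ∀ g, ‖U g‖ ≤ 1)
    -- a, b, c ∈ A with at least one of ι(a), ι(b), ι(c*) a flight vector
    (a b c : A)
    (hflight : j a ∈ flightVectors U ∨ j b ∈ flightVectors U ∨ j (star c) ∈ flightVectors U)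
    -- γ_{g',h'} is the limit of the correlation averages of x_{g,h} = ι(τ_{gh}(a) τ_g(b) τ_h(c))
    (γ : G → G → ℂ)
    (hγ : ∀ g' h' : G, Tendsto
      (fun α => ((μ (Λ1 α)).toReal * (μ (Λ2 α)).toReal)⁻¹ •
        ∫ h in Λ1 α, ∫ g in Λ2 α,
          (inner ℂ (j (τ (g * h) a * τ g b * τ h c))
            (j (τ (g * g' * (h * h')) a * τ (g * g') b * τ (h * h') c)) : ℂ) ∂μ ∂μ)
      atTop (𝓝 (γ g' h')))
    -- the system is uniformly asymptotically abelian with respect to (Λ1 α) (ε-form)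
    (hUAA : ∀ a' b' : A, ∀ ε > (0 : ℝ), ∀ᶠ α in atTop, ∀ h : G,
      (μ (Λ1 α)).toReal⁻¹ * ∫ g in Λ1 α * {h}, ‖a' * τ g b' - τ g b' * a'‖ ∂μ ≤ ε) :
    -- conclusion, with the `lim sup = 0` expressed in ε-form
    ∀ g' h' : G, ∀ ε > (0 : ℝ), ∀ᶠ α in atTop, ∀ g₁ g₂ : G,
      ‖((μ (Λ1 α)).toReal * (μ (Λ2 α)).toReal)⁻¹ •
          (∫ h in Λ1 α * {g₁}, ∫ g in Λ2 α * {g₂},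
            (inner ℂ (j (τ (g * h) a * τ g b * τ h c))
              (j (τ (g * g' * (h * h')) a * τ (g * g') b * τ (h * h') c)) : ℂ) ∂μ ∂μ)
        - γ g' h'‖ ≤ ε := by
  have hjn : ∀ x, ‖j x‖ ≤ ‖x‖ := by
    intro x
    have h1 := aux_cstar_bound ω hω_pos hω_one x
    rw [← hj_inner] at h1
    have h2 : (inner ℂ (j x) (j x) : ℂ).re = ‖j x‖ ^ 2 := by
      rw [inner_self_eq_norm_sq_to_K]; norm_cast
    rw [h2] at h1
    exact le_of_sq_le_sq h1 (norm_nonneg _)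
  have he : ‖j 1‖ = 1 := by
    have h2 : (inner ℂ (j 1) (j 1) : ℂ) = ((‖j 1‖ ^ 2 : ℝ) : ℂ) := by
      rw [inner_self_eq_norm_sq_to_K]; norm_cast
    rw [hj_inner, star_one, one_mul, hω_one] at h2
    have h3 : (1 : ℝ) = ‖j 1‖ ^ 2 := by exact_mod_cast h2
    have h4 := norm_nonneg (j 1)
    nlinarith
  have hωe : ∀ x, ω x = inner ℂ (j 1) (j x) := by
    intro x; rw [hj_inner, star_one, one_mul]
  have hωn : ∀ x, ‖ω x‖ ≤ ‖x‖ := by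
    intro x
    rw [hωe]
    refine (norm_inner_le_norm _ _).trans ?_
    rw [he, one_mul]; exact hjn x
  have hτn : ∀ g x, ‖τ g x‖ ≤ ‖x‖ := fun g x => aux_norm_aut (τ g) x
  have hUn : ∀ g x, ‖U g x‖ ≤ ‖x‖ := by
    intro g x
    simpa using (U g).le_of_opNorm_le (hU_contr g) x
  have hUmul : ∀ g h x, U g (U h x) = U (g * h) x := by
    intro g h x
    induction x using hj_dense.induction_on with
    | hp => exact isClosed_eq (by fun_prop) (by fun_prop)
    | ih x => simp only [hU, hτ_mul]
  have hUe : ∀ g, U g (j 1) = j 1 := by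
    intro g; rw [hU, map_one]
  have heU : ∀ g v, (inner ℂ (j 1) (U g v) : ℂ) = inner ℂ (j 1) v := by
    intro g x
    induction x using hj_dense.induction_on with
    | hp => exact isClosed_eq (by fun_prop) (by fun_prop)
    | ih x => rw [hU, ← hωe, ← hωe, hω_inv]
  have hseq : ∀ x : H, ∃ u : ℕ → A, Tendsto (fun n => j (u n)) atTop (𝓝 x) := by
    intro x
    obtain ⟨u, hu, hl⟩ := mem_closure_iff_seq_limit.1 (hj_dense x)
    choose v hv using hu
    exact ⟨v, by simpa only [hv] using hl⟩
  have hmeas0 : ∀ x y, Measurable fun g : G => (inner ℂ y (U g x) : ℂ) := by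
    intro x y
    obtain ⟨u, hu⟩ := hseq x
    obtain ⟨v, hv⟩ := hseq y
    refine measurable_of_tendsto_metrizable
      (f := fun n => fun g : G => (inner ℂ (j (v n)) (U g (j (u n))) : ℂ)) (fun n => ?_) ?_
    · simp only [hU, hj_inner]
      exact hτ_meas _ _
    · rw [tendsto_pi_nhds]
      intro g
      exact hv.inner (((U g).continuous.tendsto x).comp hu)
  have hmeas : ∀ k x y, Measurable fun g : G => (inner ℂ y (U (k * g) x) : ℂ) := by
    intro k x y
    have := hmeas0 (U k x) y
    simpa only [hUmul, mul_comm] using this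
  have herg : ∀ z : H, (∀ k v, (inner ℂ z (U k v) : ℂ) = inner ℂ z v) →
      (inner ℂ z (j 1) : ℂ) = 0 → z = 0 := by
    intro z hz hz1
    obtain ⟨F, hF⟩ := hErg
    have key : ∀ d : A, (inner ℂ z (j d) : ℂ) = 0 := by
      intro d
      have hle : ∀ ε > (0 : ℝ), ‖(inner ℂ z (j d) : ℂ)‖ ≤ ε * (‖j d‖ + ‖ω d‖) := by
        intro ε hε
        obtain ⟨p, hp⟩ := hj_dense.exists_dist_lt z hε
        rw [dist_eq_norm] at hp
        have hlim := hF (star p) d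
        have hω1 : ‖ω (star p)‖ ≤ ε := by
          have h1 : ω (star p) = - inner ℂ (z - j p) (j 1) := by
            rw [inner_sub_left, hz1, hj_inner, mul_one]; ring
          rw [h1, norm_neg]
          refine (norm_inner_le_norm _ _).trans ?_
          rw [he, mul_one]; exact hp.le
        have h2 : ‖ω (star p) * ω d - inner ℂ z (j d)‖ ≤ ε * ‖j d‖ := by
          refine le_of_tendsto (hlim.sub_const _).norm ?_
          filter_upwards [F.fin] with α hα
          have hpos : 0 < (μ (F.Lam α)).toReal := ENNReal.toReal_pos hα.1.ne' hα.2.ne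
          have h3 : (inner ℂ z (j d) : ℂ) = (μ (F.Lam α)).toReal⁻¹ •
              ∫ g in F.Lam α, (inner ℂ z (j d) : ℂ) ∂μ := by
            rw [setIntegral_const, Measure.real, smul_smul, inv_mul_cancel₀ hpos.ne', one_smul]
          have hint : IntegrableOn (fun g => ω (star p * τ g d)) (F.Lam α) μ :=
            Measure.integrableOn_of_bounded hα.2.ne (hτ_meas _ _).aestronglyMeasurable
              (M := ‖star p‖ * ‖d‖) (Eventually.of_forall fun g =>
                (hωn _).trans ((norm_mul_le _ _).trans (by gcongr; exact hτn _ _)))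
          rw [h3, ← smul_sub, ← integral_sub hint (integrableOn_const hα.2.ne), norm_smul,
            Real.norm_of_nonneg (by positivity)]
          have h4 : ‖∫ g in F.Lam α, (ω (star p * τ g d) - inner ℂ z (j d)) ∂μ‖
              ≤ (ε * ‖j d‖) * (μ (F.Lam α)).toReal := by
            refine norm_setIntegral_le_of_norm_le_const hα.2 (fun g _ => ?_)
            rw [← hz g (j d), hU, ← hj_inner, ← inner_sub_left]
            refine (norm_inner_le_norm _ _).trans ?_
            rw [norm_sub_rev, ← hU]
            gcongr
            exact hUn _ _
          calc _ ≤ (μ (F.Lam α)).toReal⁻¹ * ((ε * ‖j d‖) * (μ (F.Lam α)).toReal) := by gcongr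
            _ = ε * ‖j d‖ := by field_simp
        calc ‖(inner ℂ z (j d) : ℂ)‖
            = ‖ω (star p) * ω d - (ω (star p) * ω d - inner ℂ z (j d))‖ := by
              congr 1; ring
          _ ≤ ‖ω (star p)‖ * ‖ω d‖ + ε * ‖j d‖ := by
              refine (norm_sub_le _ _).trans ?_
              rw [norm_mul]; gcongr
          _ ≤ ε * ‖ω d‖ + ε * ‖j d‖ := by gcongr
          _ = _ := by ring
      by_contra hne
      have hpos : 0 < ‖(inner ℂ z (j d) : ℂ)‖ := norm_pos_iff.2 hne
      have hK : 0 ≤ ‖j d‖ + ‖ω d‖ := by positivity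
      have h5 := hle (‖(inner ℂ z (j d) : ℂ)‖ / (2 * (‖j d‖ + ‖ω d‖ + 1))) (by positivity)
      rw [div_mul_eq_mul_div, le_div_iff₀ (by positivity)] at h5
      nlinarith
    have hz2 : ∀ v, (inner ℂ z v : ℂ) = 0 := by
      intro x
      induction x using hj_dense.induction_on with
      | hp => exact isClosed_eq (by fun_prop) (by fun_prop)
      | ih x => exact key x
    exact inner_self_eq_zero.1 (hz2 z)
  have hQ1 : ∀ x, AuxQ μ Λ1 U (j 1) (MonoidHom.id G) x := fun x =>
    aux_uniform hTrans hRight Λ1 hΛ1 hΛ1fin hΛ1folner U hUmul hUn (j 1) he hUe heU hmeas herg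
      _ measurable_id Function.surjective_id x
  have hQ2 : ∀ x, AuxQ μ Λ2 U (j 1) (invMonoidHom : G →* G) x := fun x =>
    aux_uniform hTrans hRight Λ2 hΛ2 hΛ2fin hΛ2folner U hUmul hUn (j 1) he hUe heU hmeas herg
      _ hInvMeas inv_surjective x
  intro g' h'
  set C : A := τ h' c * star c with hC
  set A0 : A := star a * τ (g' * h') a with hA0
  set B : A := τ g' b with hB
  set D : A := star b * B with hD
  set L : ℂ := ω C * (ω A0 * ω D) with hL
  have hinner : ∀ g h, (inner ℂ (j (τ (g * h) a * τ g b * τ h c))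
      (j (τ (g * g' * (h * h')) a * τ (g * g') b * τ (h * h') c)) : ℂ)
      = ω (τ h C * τ g (star b) * τ (g * h) A0 * τ g B * τ h 1) := by
    intro g h
    have e1 : τ (g * g' * (h * h')) a = τ (g * h) (τ (g' * h') a) := by
      rw [hτ_mul]; congr 1; congr 1; exact mul_mul_mul_comm _ _ _ _
    rw [hj_inner, e1, ← hτ_mul g g' b, ← hτ_mul h h' c, hC, hA0, hB]
    simp only [map_mul, map_star, star_mul, map_one, mul_one]
    rw [← mul_assoc, hω_tracial _ (τ h (τ h' c))]
    simp only [mul_assoc]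
  simp only [hinner]
  have main : ∀ ε > (0 : ℝ), ∀ᶠ α in atTop, ∀ g₁ g₂ : G,
      ‖((μ (Λ1 α)).toReal * (μ (Λ2 α)).toReal)⁻¹ •
          (∫ h in Λ1 α * {g₁}, ∫ g in Λ2 α * {g₂},
            ω (τ h C * τ g (star b) * τ (g * h) A0 * τ g B * τ h 1) ∂μ ∂μ) - L‖ ≤ ε := by
    intro ε hε
    obtain ⟨δ, hδ, hδε⟩ : ∃ δ > (0 : ℝ),
        δ * (‖C‖ * ‖B‖ + ‖A0‖ * ‖D‖ + ‖C‖ * ‖D‖) ≤ ε := by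
      refine ⟨ε / (‖C‖ * ‖B‖ + ‖A0‖ * ‖D‖ + ‖C‖ * ‖D‖ + 1), by positivity, ?_⟩
      rw [div_mul_eq_mul_div, div_le_iff₀ (by positivity)]
      nlinarith
    filter_upwards [hΛ1fin, hΛ2fin, hQ1 (j A0) δ hδ, hQ2 (j C) δ hδ, hUAA (star b) A0 δ hδ]
      with α h1fin h2fin hq1 hq2 huaa g₁ g₂
    have hp1 : 0 < (μ (Λ1 α)).toReal := ENNReal.toReal_pos h1fin.1.ne' h1fin.2.ne
    have hp2 : 0 < (μ (Λ2 α)).toReal := ENNReal.toReal_pos h2fin.1.ne' h2fin.2.ne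
    have : IsFiniteMeasure (μ.restrict (Λ2 α)) := ⟨by simpa using h2fin.2⟩
    have hau := huaa g₁
    rw [aux_shift hTrans hRight] at hau ⊢
    simp only [aux_shift hTrans hRight _ (Λ2 α) g₂]
    set m1 := (μ (Λ1 α)).toReal with hm1
    set m2 := (μ (Λ2 α)).toReal with hm2
    -- the integrand
    set f : G → G → ℂ := fun h g => ω (τ (h * g₁) C * τ (g * g₂) (star b) *
      τ (g * g₂ * (h * g₁)) A0 * τ (g * g₂) B * τ (h * g₁) 1) with hf
    have hfm : Measurable fun q : G × G => f q.2 q.1 :=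
      (hmeas5 C (star b) A0 B 1).comp
        (((aux_shift_meas hTrans g₂).comp measurable_fst).prodMk
          ((aux_shift_meas hTrans g₁).comp measurable_snd))
    have hfb : ∀ h g, ‖f h g‖ ≤ ‖C‖ * ‖star b‖ * ‖A0‖ * ‖B‖ := by
      intro h g
      simp only [hf, map_one, mul_one]
      refine (hωn _).trans ((norm_mul_le _ _).trans ?_)
      gcongr
      · refine (norm_mul_le _ _).trans ?_
        gcongr
        · refine (norm_mul_le _ _).trans ?_
          gcongr <;> exact hτn _ _
        · exact hτn _ _
      · exact hτn _ _
    have hfi : ∀ h, IntegrableOn (f h) (Λ2 α) μ := fun h =>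
      Measure.integrableOn_of_bounded h2fin.2.ne
        (hfm.comp (measurable_id.prodMk measurable_const)).aestronglyMeasurable
        (Eventually.of_forall (hfb h))
    set n : G → ℝ := fun h => ‖star b * τ (h * g₁) A0 - τ (h * g₁) A0 * star b‖ with hn
    have hnm : Measurable n := (hcomm_meas (star b) A0).comp (aux_shift_meas hTrans g₁)
    have hni : IntegrableOn n (Λ1 α) μ := by
      refine Measure.integrableOn_of_bounded h1fin.2.ne hnm.aestronglyMeasurable
        (M := ‖star b‖ * ‖A0‖ + ‖A0‖ * ‖star b‖) (Eventually.of_forall fun h => ?_)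
      simp only [hn, norm_norm]
      refine (norm_sub_le _ _).trans (add_le_add ?_ ?_)
      · refine (norm_mul_le _ _).trans ?_
        gcongr; exact hτn _ _
      · refine (norm_mul_le _ _).trans ?_
        gcongr; exact hτn _ _
    set y : G → H := fun h => j (star (τ (h * g₁) A0 * D)) with hy
    have hyn : ∀ h, ‖y h‖ ≤ ‖A0‖ * ‖D‖ := by
      intro h
      refine (hjn _).trans ?_
      rw [norm_star]
      refine (norm_mul_le _ _).trans ?_
      gcongr; exact hτn _ _
    have hye : ∀ h, (inner ℂ (y h) (j 1) : ℂ) = inner ℂ (j (star D)) (U (g₁ * h) (j A0)) := by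
      intro h
      simp only [hy, hU, hj_inner, star_star, mul_one]
      rw [hω_tracial, mul_comm]
    set p : G → G → ℂ := fun h g => inner ℂ (y h) (U (h * g₁ * g₂⁻¹ * g⁻¹) (j C)) with hp
    have hpi : ∀ h, IntegrableOn (p h) (Λ2 α) μ := by
      intro h
      refine Measure.integrableOn_of_bounded h2fin.2.ne
        ((hmeas (h * g₁ * g₂⁻¹) (j C) (y h)).comp hInvMeas).aestronglyMeasurable
        (M := ‖y h‖ * ‖j C‖)
        (Eventually.of_forall fun g => ?_)
      refine (norm_inner_le_norm _ _).trans ?_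
      gcongr; exact hUn _ _
    have hfp : ∀ h g, ‖f h g - p h g‖ ≤ ‖C‖ * ‖B‖ * n h := by
      intro h g
      have e1 : f h g = ω (τ (h * g₁ * g₂⁻¹ * g⁻¹) C * (star b * τ (h * g₁) A0) * B) := by
        rw [← hω_inv (g * g₂)]
        simp only [hf, map_mul, hτ_mul, map_one, mul_one]
        have : g * g₂ * (h * g₁ * g₂⁻¹ * g⁻¹) = h * g₁ := by
          rw [mul_assoc (h * g₁), ← mul_inv_rev, mul_comm, inv_mul_cancel_right]
        rw [this]
        simp only [mul_assoc]
      have e2 : p h g = ω (τ (h * g₁ * g₂⁻¹ * g⁻¹) C * (τ (h * g₁) A0 * star b) * B) := by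
        simp only [hp, hy, hU, hj_inner, star_star]
        rw [hω_tracial, hD]
        simp only [mul_assoc]
      rw [e1, e2, ← map_sub, ← sub_mul, ← mul_sub]
      refine (hωn _).trans ((norm_mul_le _ _).trans ?_)
      calc _ ≤ (‖C‖ * n h) * ‖B‖ := by
            gcongr
            refine (norm_mul_le _ _).trans ?_
            gcongr
            exact hτn _ _
        _ = _ := by ring
    set E : G → ℂ := fun h => (m2 : ℂ) * (ω C * inner ℂ (j (star D)) (U (g₁ * h) (j A0))) with hE
    have hstep1 : ∀ h, ‖(∫ g in Λ2 α, f h g ∂μ) - E h‖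
        ≤ m2 * (‖C‖ * ‖B‖) * n h + m2 * (δ * (‖A0‖ * ‖D‖)) := by
      intro h
      have h1 : ‖(∫ g in Λ2 α, f h g ∂μ) - ∫ g in Λ2 α, p h g ∂μ‖
          ≤ (‖C‖ * ‖B‖ * n h) * m2 := by
        rw [← integral_sub (hfi h) (hpi h)]
        exact norm_setIntegral_le_of_norm_le_const h2fin.2 (fun g _ => hfp h g)
      have h2 : ‖(∫ g in Λ2 α, p h g ∂μ) - E h‖ ≤ δ * m2 * ‖y h‖ := by
        have := hq2 (h * g₁ * g₂⁻¹) (y h)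
        rw [← hωe, hye] at this
        exact this
      have h3 : δ * m2 * ‖y h‖ ≤ δ * m2 * (‖A0‖ * ‖D‖) := by
        gcongr; exact hyn h
      calc _ = _ := congrArg norm (sub_add_sub_cancel _ (∫ g in Λ2 α, p h g ∂μ) _).symm
        _ ≤ _ := (norm_add_le _ _).trans (add_le_add h1 (h2.trans h3))
        _ = _ := by ring
    have hFi : IntegrableOn (fun h => ∫ g in Λ2 α, f h g ∂μ) (Λ1 α) μ := by
      refine Measure.integrableOn_of_bounded h1fin.2.ne
        (StronglyMeasurable.integral_prod_left' (μ := μ.restrict (Λ2 α))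
          hfm.stronglyMeasurable).aestronglyMeasurable
        (M := ‖C‖ * ‖star b‖ * ‖A0‖ * ‖B‖ * m2) (Eventually.of_forall fun h => ?_)
      exact norm_setIntegral_le_of_norm_le_const h2fin.2 (fun g _ => hfb h g)
    have hEi : IntegrableOn E (Λ1 α) μ := by
      have : IntegrableOn (fun h : G => (inner ℂ (j (star D)) (U (g₁ * h) (j A0)) : ℂ))
          (Λ1 α) μ := by
        refine Measure.integrableOn_of_bounded h1fin.2.ne
          (hmeas g₁ (j A0) (j (star D))).aestronglyMeasurable
          (M := ‖j (star D)‖ * ‖j A0‖) (Eventually.of_forall fun g => ?_)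
        refine (norm_inner_le_norm _ _).trans ?_
        gcongr; exact hUn _ _
      exact (this.const_mul (ω C)).const_mul (m2 : ℂ)
    have hstep2 : ‖(∫ h in Λ1 α, ∫ g in Λ2 α, f h g ∂μ ∂μ) - ∫ h in Λ1 α, E h ∂μ‖
        ≤ m1 * m2 * (δ * (‖C‖ * ‖B‖ + ‖A0‖ * ‖D‖)) := by
      rw [← integral_sub hFi hEi]
      have hci : IntegrableOn (fun _ : G => m2 * (δ * (‖A0‖ * ‖D‖))) (Λ1 α) μ :=
        integrableOn_const h1fin.2.ne
      have h1 := norm_integral_le_of_norm_le ((hni.const_mul (m2 * (‖C‖ * ‖B‖))).add hci)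
        (Eventually.of_forall hstep1)
      refine h1.trans ?_
      have h2 : ∫ h in Λ1 α, n h ∂μ ≤ m1 * δ := by
        rwa [inv_mul_le_iff₀ hp1] at hau
      have h3 : ∫ h in Λ1 α, (m2 * (‖C‖ * ‖B‖) * n h +
          m2 * (δ * (‖A0‖ * ‖D‖))) ∂μ
          = m2 * (‖C‖ * ‖B‖) * (∫ h in Λ1 α, n h ∂μ) + m1 * (m2 * (δ * (‖A0‖ * ‖D‖))) := by
        rw [integral_add (hni.const_mul _) hci, integral_const_mul, setIntegral_const, smul_eq_mul]
        rfl
      refine h3.le.trans ?_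
      calc _ ≤ m2 * (‖C‖ * ‖B‖) * (m1 * δ) + m1 * (m2 * (δ * (‖A0‖ * ‖D‖))) := by gcongr
        _ = _ := by ring
    have hstep3 : ‖(∫ h in Λ1 α, E h ∂μ) - (m1 * m2 : ℂ) * L‖ ≤ m1 * m2 * (δ * (‖C‖ * ‖D‖)) := by
      have h1 := hq1 g₁ (j (star D))
      simp only [MonoidHom.id_apply] at h1
      rw [← hωe, hj_inner, star_star, mul_one] at h1
      have h2 : (∫ h in Λ1 α, E h ∂μ) - (m1 * m2 : ℂ) * L = (m2 * ω C) *
          ((∫ h in Λ1 α, (inner ℂ (j (star D)) (U (g₁ * h) (j A0)) : ℂ) ∂μ)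
            - (m1 : ℂ) * (ω A0 * ω D)) := by
        simp only [hE, hL]
        rw [integral_const_mul, integral_const_mul]
        ring
      rw [h2, norm_mul, norm_mul, Complex.norm_of_nonneg hp2.le]
      have h3 : ‖j (star D)‖ ≤ ‖D‖ := (hjn _).trans (norm_star D).le
      calc _ ≤ (m2 * ‖C‖) * (δ * m1 * ‖j (star D)‖) := by
            gcongr
            exact hωn C
        _ ≤ (m2 * ‖C‖) * (δ * m1 * ‖D‖) := by gcongr
        _ = _ := by ring
    have hfinal : ‖(∫ h in Λ1 α, ∫ g in Λ2 α, f h g ∂μ ∂μ) - (m1 * m2 : ℂ) * L‖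
        ≤ m1 * m2 * ε := by
      calc _ = _ := congrArg norm (sub_add_sub_cancel _ (∫ h in Λ1 α, E h ∂μ) _).symm
        _ ≤ _ := (norm_add_le _ _).trans (add_le_add hstep2 hstep3)
        _ = m1 * m2 * (δ * (‖C‖ * ‖B‖ + ‖A0‖ * ‖D‖ + ‖C‖ * ‖D‖)) := by ring
        _ ≤ _ := by gcongr
    have hpp : 0 < m1 * m2 := mul_pos hp1 hp2
    have h5 : L = (m1 * m2)⁻¹ • ((m1 * m2 : ℂ) * L) := by
      have h1 : (m1 : ℂ) ≠ 0 := by exact_mod_cast hp1.ne'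
      have h2 : (m2 : ℂ) ≠ 0 := by exact_mod_cast hp2.ne'
      rw [Complex.real_smul]
      push_cast
      field_simp
    rw [h5, ← smul_sub, norm_smul, Real.norm_of_nonneg (by positivity), inv_mul_le_iff₀ hpp]
    exact hfinal
  have hγL : γ g' h' = L := by
    refine tendsto_nhds_unique (hγ g' h') ?_
    rw [Metric.tendsto_nhds]
    intro ε hε
    filter_upwards [main (ε / 2) (half_pos hε)] with α hα
    have h1 := hα 1 1
    simp only [Set.singleton_one, mul_one] at h1
    simp only [hinner]
    rw [dist_eq_norm]
    exact lt_of_le_of_lt h1 (half_lt_self hε)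
  rw [hγL]
  exact main
end

section
/- Let (A,ω,τ,G) be an ergodic C*-dynamical system with ω tracial, where G is a second countable topological group, Σ its Borel σ-algebra, μ σ-finite, right and left invariant, and (g,h,j,k) ↦ ω(τ_h(a₁) τ_g(a₂) τ_{gh}(a₃) τ_{jk}(a₄) τ_j(a₅) τ_k(a₆)) is Σ² × Σ²-measurable for all a₁,...,a₆ ∈ A. Assume there exist uniform Følner sequences (Λ_{1,n}) and (Λ_{2,n}) in G satisfying the Tempel'man condition and such that (Λ_{1,n}⁻¹Λ_{1,n}) and (Λ_{2,n}⁻¹Λ_{2,n}) are also Følner in G. Fix a GNS representation of (A,ω) and a, b, c ∈ A with at least one of ι(a), ι(b), ι(c*) in H_v, and set x_{g,h} := ι(τ_{gh}(a) τ_g(b) τ_h(c)). If (A,ω,τ,G) is asymptotically abelian with respect to (Λ_{1,n}), then lim_{n→∞} (1/(μ(Λ_{1,n})μ(Λ_{2,n}))) ∫_{Λ_{1,n}} ∫_{Λ_{2,n}} x_{g,h} dg dh = 0. -/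
open MeasureTheory Filter Topology
open scoped Pointwise ComplexOrder

set_option linter.unusedSectionVars false

section HilbertPart

variable {H : Type*} [NormedAddCommGroup H] [InnerProductSpace ℂ H] [CompleteSpace H]

/-- A bounded sesquilinear form is represented by an operator. -/
theorem exists_op_of_form (B : H → H → ℂ) (C : ℝ)
    (hadd1 : ∀ v v' w, B (v + v') w = B v w + B v' w)
    (hsmul1 : ∀ (c : ℂ) v w, B (c • v) w = (starRingEnd ℂ) c * B v w)
    (hadd2 : ∀ v w w', B v (w + w') = B v w + B v w')
    (hsmul2 : ∀ (c : ℂ) v w, B v (c • w) = c * B v w)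
    (hbd : ∀ v w, ‖B v w‖ ≤ C * ‖v‖ * ‖w‖) :
    ∃ T : H →L[ℂ] H, ∀ v w, inner ℂ v (T w) = B v w := by
  let L : H →ₗ⋆[ℂ] H →ₗ[ℂ] ℂ := LinearMap.mk₂'ₛₗ (starRingEnd ℂ) (RingHom.id ℂ) B hadd1
    (fun c v w => by simpa using hsmul1 c v w) hadd2 (fun c v w => by simpa using hsmul2 c v w)
  let L' : H →L⋆[ℂ] H →L[ℂ] ℂ := L.mkContinuous₂ C (fun v w => hbd v w)
  refine ⟨ContinuousLinearMap.adjoint (InnerProductSpace.continuousLinearMapOfBilin L'), ?_⟩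
  intro v w
  rw [ContinuousLinearMap.adjoint_inner_right,
    InnerProductSpace.continuousLinearMapOfBilin_apply]
  rfl

/-- finite orthonormal sets -/
def ONSet (s : Finset H) : Prop :=
  (∀ e ∈ s, ‖e‖ = 1) ∧ ∀ e ∈ s, ∀ f ∈ s, e ≠ f → inner ℂ e f = (0 : ℂ)

theorem norm_sq_le_of_pos (T : H →L[ℂ] H)
    (hsym : ∀ v w, inner ℂ (T v) w = inner ℂ v (T w))
    (hpos : ∀ v, 0 ≤ (inner ℂ v (T v) : ℂ).re) (w : H) :
    ‖T w‖ ^ 2 ≤ (‖T‖ + 1) * (inner ℂ w (T w) : ℂ).re := by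
  set K := ‖T‖ + 1 with hK
  have hK0 : 0 < K := by positivity
  have h1 := hpos (w - ((K⁻¹ : ℝ) : ℂ) • T w)
  have e1 : (inner ℂ (w - ((K⁻¹ : ℝ) : ℂ) • T w) (T (w - ((K⁻¹ : ℝ) : ℂ) • T w)) : ℂ)
      = inner ℂ w (T w) - 2 * (K⁻¹ : ℝ) * inner ℂ (T w) (T w)
        + (K⁻¹ : ℝ) * (K⁻¹ : ℝ) * inner ℂ (T w) (T (T w)) := by
    simp only [map_sub, map_smul, inner_sub_left, inner_sub_right, inner_smul_left,
      inner_smul_right, Complex.conj_ofReal]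
    rw [← hsym w (T w)]
    ring
  have e2 : (inner ℂ (T w) (T w) : ℂ) = ((‖T w‖ ^ 2 : ℝ) : ℂ) := by
    rw [inner_self_eq_norm_sq_to_K]; push_cast; rfl
  rw [e1, e2] at h1
  have h2 : (inner ℂ (T w) (T (T w)) : ℂ).re ≤ K * ‖T w‖ ^ 2 := by
    calc (inner ℂ (T w) (T (T w)) : ℂ).re ≤ ‖(inner ℂ (T w) (T (T w)) : ℂ)‖ := Complex.re_le_norm _
      _ ≤ ‖T w‖ * ‖T (T w)‖ := norm_inner_le_norm _ _
      _ ≤ ‖T w‖ * (‖T‖ * ‖T w‖) := by gcongr; exact T.le_opNorm _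
      _ ≤ K * ‖T w‖ ^ 2 := by rw [hK]; nlinarith [sq_nonneg ‖T w‖]
  have h3 : (inner ℂ w (T w) - 2 * (K⁻¹ : ℝ) * ((‖T w‖ ^ 2 : ℝ) : ℂ)
        + (K⁻¹ : ℝ) * (K⁻¹ : ℝ) * inner ℂ (T w) (T (T w)) : ℂ).re
      = (inner ℂ w (T w) : ℂ).re - 2 * K⁻¹ * ‖T w‖ ^ 2
        + K⁻¹ * K⁻¹ * (inner ℂ (T w) (T (T w)) : ℂ).re := by
    rw [Complex.add_re, Complex.sub_re]
    rw [show (2 * ((K⁻¹ : ℝ) : ℂ) * ((‖T w‖ ^ 2 : ℝ) : ℂ)) = ((2 * K⁻¹ * ‖T w‖ ^ 2 : ℝ) : ℂ) by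
      push_cast; ring]
    rw [show ((K⁻¹ : ℝ) : ℂ) * ((K⁻¹ : ℝ) : ℂ) = ((K⁻¹ * K⁻¹ : ℝ) : ℂ) by push_cast; ring]
    rw [Complex.re_ofReal_mul, Complex.ofReal_re]
  rw [h3] at h1
  have h4 : K⁻¹ * K⁻¹ * (inner ℂ (T w) (T (T w)) : ℂ).re ≤ K⁻¹ * ‖T w‖ ^ 2 := by
    calc _ ≤ K⁻¹ * K⁻¹ * (K * ‖T w‖ ^ 2) := by gcongr
      _ = _ := by field_simp
  have h5 : K⁻¹ * ‖T w‖ ^ 2 ≤ (inner ℂ w (T w) : ℂ).re := by linarith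
  calc ‖T w‖ ^ 2 = K * (K⁻¹ * ‖T w‖ ^ 2) := by field_simp
    _ ≤ _ := by gcongr

theorem compact_of_trace (T : H →L[ℂ] H)
    (hsym : ∀ v w, inner ℂ (T v) w = inner ℂ v (T w))
    (hpos : ∀ v, 0 ≤ (inner ℂ v (T v) : ℂ).re) (M : ℝ)
    (htr : ∀ s : Finset H, ONSet s → ∑ e ∈ s, (inner ℂ e (T e) : ℂ).re ≤ M) :
    IsCompactOperator T := by
  classical
  have hcl := isClosed_setOfPred_isCompactOperator (σ₁₂ := RingHom.id ℂ) (M₁ := H) (M₂ := H)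
  have key : T ∈ closure {f : H →L[ℂ] H | IsCompactOperator f} := by
    rw [Metric.mem_closure_iff]
    intro ε hε
    set K := ‖T‖ + 1 with hK
    have hK0 : 0 < K := by positivity
    set δ := (ε / 2) ^ 2 / K with hδ
    have hδ0 : 0 < δ := by positivity
    let S : Set ℝ := {r | ∃ s : Finset H, ONSet s ∧ r = ∑ e ∈ s, (inner ℂ e (T e) : ℂ).re}
    have hS : BddAbove S := ⟨M, by rintro r ⟨s, hs, rfl⟩; exact htr s hs⟩
    have hne : S.Nonempty := ⟨0, ∅, by simp [ONSet], by simp⟩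
    obtain ⟨r, ⟨s, hs, rfl⟩, hr⟩ := exists_lt_of_lt_csSup hne (sub_lt_self (sSup S) hδ0)
    have hq : ∀ y : H, ‖y‖ = 1 → (∀ e ∈ s, inner ℂ e y = (0 : ℂ)) →
        (inner ℂ y (T y) : ℂ).re ≤ δ := by
      intro y hy hys
      have hyn : y ∉ s := by
        intro h
        have := hys y h
        rw [inner_self_eq_zero] at this
        simp [this] at hy
      have hON : ONSet (insert y s) := by
        constructor
        · intro e he
          rcases Finset.mem_insert.1 he with rfl | he
          · exact hy
          · exact hs.1 e he
        · intro e he f hf hef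
          rcases Finset.mem_insert.1 he with he' | he' <;>
          rcases Finset.mem_insert.1 hf with hf' | hf'
          · exact absurd (he'.trans hf'.symm) hef
          · rw [he', ← inner_conj_symm, hys f hf', map_zero]
          · rw [hf']; exact hys e he'
          · exact hs.2 e he' f hf' hef
      have := le_csSup hS ⟨_, hON, rfl⟩
      rw [Finset.sum_insert hyn] at this
      linarith
    have hq2 : ∀ y : H, (∀ e ∈ s, inner ℂ e y = (0 : ℂ)) →
        (inner ℂ y (T y) : ℂ).re ≤ δ * ‖y‖ ^ 2 := by
      intro y hy
      by_cases h0 : y = 0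
      · simp [h0]
      have hn : ‖y‖ ≠ 0 := norm_ne_zero_iff.2 h0
      have := hq (((‖y‖⁻¹ : ℝ) : ℂ) • y) (by simp [norm_smul, hn])
        (by intro e he; rw [inner_smul_right, hy e he, mul_zero])
      rw [map_smul, inner_smul_left, inner_smul_right, Complex.conj_ofReal,
        Complex.re_ofReal_mul, Complex.re_ofReal_mul] at this
      calc (inner ℂ y (T y) : ℂ).re
          = ‖y‖ ^ 2 * (‖y‖⁻¹ * (‖y‖⁻¹ * (inner ℂ y (T y) : ℂ).re)) := by field_simp
        _ ≤ ‖y‖ ^ 2 * δ := by gcongr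
        _ = _ := by ring
    let E : Submodule ℂ H := Submodule.span ℂ (s : Set H)
    have : FiniteDimensional ℂ E := FiniteDimensional.span_finset ℂ s
    refine ⟨T ∘L E.starProjection, ?_, ?_⟩
    · have : IsCompactOperator (E.orthogonalProjectionOnto) :=
        isCompactOperator_of_locallyCompactSpace_dom E.orthogonalProjectionOnto
      exact this.clm_comp (T ∘L E.subtypeL)
    · rw [dist_eq_norm]
      refine lt_of_le_of_lt (ContinuousLinearMap.opNorm_le_bound _ (half_pos hε).le ?_)
        (half_lt_self hε)
      intro x
      set y := x - E.starProjection x with hy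
      have hyE : y ∈ Eᗮ := E.sub_starProjection_mem_orthogonal x
      have e1 : (T - T ∘L E.starProjection) x = T y := by
        rw [hy, map_sub]; rfl
      rw [e1]
      have hyx : ‖y‖ ≤ ‖x‖ := by
        rw [hy, ← Submodule.starProjection_orthogonal_val]
        calc _ ≤ ‖Eᗮ.starProjection‖ * ‖x‖ := ContinuousLinearMap.le_opNorm _ _
          _ ≤ 1 * ‖x‖ := by gcongr; exact Submodule.starProjection_norm_le _
          _ = ‖x‖ := one_mul _
      have h1 := norm_sq_le_of_pos T hsym hpos y
      have h2 := hq2 y (fun e he => (Submodule.mem_orthogonal E y).1 hyE e (Submodule.subset_span he))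
      have h3 : ‖T y‖ ^ 2 ≤ (ε / 2 * ‖x‖) ^ 2 := by
        calc ‖T y‖ ^ 2 ≤ K * (δ * ‖y‖ ^ 2) := h1.trans (by gcongr)
          _ = (ε / 2 * ‖y‖) ^ 2 := by rw [hδ]; field_simp
          _ ≤ _ := by gcongr
      exact le_of_sq_le_sq h3 (by positivity)
  rwa [hcl.closure_eq] at key

theorem exists_joint_eigenvector {G : Type*} (U : G → H →L[ℂ] H)
    (hcomm : ∀ g h x, U g (U h x) = U h (U g x)) :
    ∀ (n : ℕ) (E : Submodule ℂ H), FiniteDimensional ℂ E → Module.finrank ℂ E = n → E ≠ ⊥ →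
      (∀ g, ∀ x ∈ E, U g x ∈ E) → ∃ v ∈ E, v ≠ 0 ∧ ∀ g, ∃ l : ℂ, U g v = l • v := by
  intro n
  induction n using Nat.strong_induction_on with
  | _ n ih =>
  intro E hfd hn hE hinv
  by_cases hall : ∀ g, ∃ l : ℂ, ∀ x ∈ E, U g x = l • x
  · obtain ⟨v, hv, hv0⟩ := Submodule.exists_mem_ne_zero_of_ne_bot hE
    exact ⟨v, hv, hv0, fun g => (hall g).imp fun l hl => hl v hv⟩
  · push Not at hall
    obtain ⟨g, hg⟩ := hall
    have : Nontrivial E := Submodule.nontrivial_iff_ne_bot.2 hE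
    let f : E →ₗ[ℂ] E := (U g).toLinearMap.restrict (hinv g)
    obtain ⟨l, hl⟩ := Module.End.exists_eigenvalue f
    obtain ⟨w, hw⟩ := hl.exists_hasEigenvector
    let E' : Submodule ℂ H := E ⊓ Module.End.eigenspace (U g).toLinearMap l
    have hwE : (w : H) ∈ E' := by
      refine ⟨w.2, ?_⟩
      rw [SetLike.mem_coe, Module.End.mem_eigenspace_iff]
      have := hw.apply_eq_smul
      exact congrArg Subtype.val this
    have hlt : E' < E := by
      refine lt_of_le_of_ne inf_le_left ?_
      intro h
      obtain ⟨x, hx, hx'⟩ := hg l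
      rw [← h] at hx
      exact hx' (Module.End.mem_eigenspace_iff.1 hx.2)
    have hfd' : FiniteDimensional ℂ E' := Submodule.finiteDimensional_of_le hlt.le
    obtain ⟨v, hv, h⟩ := ih _ (hn ▸ Submodule.finrank_lt_finrank_of_lt hlt) E' hfd' rfl
      (by
        intro h
        rw [h, Submodule.mem_bot] at hwE
        exact hw.2 (Subtype.ext hwE))
      (by
        intro k x hx
        refine ⟨hinv k x hx.1, ?_⟩
        have := Module.End.mem_eigenspace_iff.1 hx.2
        rw [SetLike.mem_coe, Module.End.mem_eigenspace_iff]
        change U g (U k x) = l • U k x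
        rw [hcomm, show U g x = l • x from this, map_smul])
    exact ⟨v, hlt.le hv, h⟩

/-- A nonzero positive finite trace operator commuting with isometries `U` yields a joint
unimodular eigenvector in its range. -/
theorem exists_unimodular_eigenvector {G : Type*} (U : G → H →L[ℂ] H)
    (hcomm : ∀ g h x, U g (U h x) = U h (U g x)) (hnorm : ∀ g x, ‖U g x‖ = ‖x‖)
    (T : H →L[ℂ] H)
    (hsym : ∀ v w, inner ℂ (T v) w = inner ℂ v (T w))
    (hpos : ∀ v, 0 ≤ (inner ℂ v (T v) : ℂ).re) (M : ℝ)
    (htr : ∀ s : Finset H, ONSet s → ∑ e ∈ s, (inner ℂ e (T e) : ℂ).re ≤ M)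
    (hTU : ∀ g x, T (U g x) = U g (T x)) (hT0 : T ≠ 0) :
    ∃ v : H, v ≠ 0 ∧ (∃ lam : G → ℂ, ∀ g, ‖lam g‖ = 1 ∧ U g v = lam g • v) ∧ ∃ w, T w = v := by
  have hc := compact_of_trace T hsym hpos M htr
  have h1 := (ContinuousLinearMap.eq_zero_of_forall_hasEigenvalue_eq_zero hc
    (fun v w => hsym v w)).not.2 hT0
  push Not at h1
  obtain ⟨l, hl, hl0⟩ := h1
  have hfd := ContinuousLinearMap.finite_dimensional_eigenspace hc l hl0
  obtain ⟨v, hv, hv0, hv1⟩ := exists_joint_eigenvector U hcomm _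
    (Module.End.eigenspace T.toLinearMap l) hfd rfl hl (by
      intro g x hx
      rw [Module.End.mem_eigenspace_iff] at hx ⊢
      change T (U g x) = l • U g x
      rw [hTU, show T x = l • x from hx, map_smul])
  choose lam hlam using hv1
  refine ⟨v, hv0, ⟨lam, fun g => ⟨?_, hlam g⟩⟩, l⁻¹ • v, ?_⟩
  · have := hnorm g v
    rw [hlam g, norm_smul] at this
    have h0 : ‖v‖ ≠ 0 := norm_ne_zero_iff.2 hv0
    exact mul_right_cancel₀ h0 (by rw [this, one_mul])
  · rw [Module.End.mem_eigenspace_iff] at hv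
    rw [map_smul, show T v = l • v from hv, smul_smul, inv_mul_cancel₀ hl0, one_smul]

end HilbertPart
open MeasureTheory Filter Topology
open scoped Pointwise ComplexOrder
set_option linter.unusedSectionVars false

section AvPart

variable {G : Type*} [MeasurableSpace G]
variable {E : Type*} [NormedAddCommGroup E] [NormedSpace ℝ E]

/-- average of `f` over `L` -/
noncomputable def av (μ : Measure G) (L : Set G) (f : G → E) : E :=
  (μ L).toReal⁻¹ • ∫ g in L, f g ∂μ

/-- bounded measurable functions -/
def BM [MeasurableSpace E] (f : G → E) : Prop := Measurable f ∧ ∃ C : ℝ, ∀ g, ‖f g‖ ≤ C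

theorem av_top (μ : Measure G) (L : Set G) (h : μ L = ⊤) (f : G → E) : av μ L f = 0 := by
  simp [av, h]

theorem BM.integrableOn [MeasurableSpace E] [BorelSpace E] [SecondCountableTopology E]
    {f : G → E} (hf : BM f) (μ : Measure G) {L : Set G} (h : μ L ≠ ⊤) :
    IntegrableOn f L μ := by
  obtain ⟨C, hC⟩ := hf.2
  have : IsFiniteMeasure (μ.restrict L) := ⟨by simpa using h.lt_top⟩
  exact Integrable.of_bound hf.1.aestronglyMeasurable C (Eventually.of_forall hC)

theorem av_norm_le (μ : Measure G) (L : Set G) {f : G → E} {C : ℝ} (hC : 0 ≤ C)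
    (h : ∀ g, ‖f g‖ ≤ C) : ‖av μ L f‖ ≤ C := by
  by_cases hL : μ L = ⊤
  · rw [av_top μ L hL]; simpa
  have := norm_setIntegral_le_of_norm_le_const (μ := μ) (s := L) (f := f) (C := C)
    (lt_top_iff_ne_top.2 hL) (fun x _ => h x)
  rw [av, norm_smul, norm_inv, Real.norm_of_nonneg ENNReal.toReal_nonneg]
  by_cases h0 : (μ L).toReal = 0
  · simpa [h0]
  have hp : 0 < (μ L).toReal := lt_of_le_of_ne ENNReal.toReal_nonneg (Ne.symm h0)
  calc (μ L).toReal⁻¹ * ‖∫ g in L, f g ∂μ‖ ≤ (μ L).toReal⁻¹ * (C * (μ L).toReal) := by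
        gcongr; exact this
    _ = C := by field_simp

theorem av_add [MeasurableSpace E] [BorelSpace E] [SecondCountableTopology E]
    (μ : Measure G) (L : Set G) {f f' : G → E} (hf : BM f) (hf' : BM f') :
    av μ L (fun g => f g + f' g) = av μ L f + av μ L f' := by
  by_cases hL : μ L = ⊤
  · simp [av_top μ L hL]
  rw [av, integral_add (hf.integrableOn μ hL) (hf'.integrableOn μ hL), smul_add]; rfl

theorem av_sub [MeasurableSpace E] [BorelSpace E] [SecondCountableTopology E]
    (μ : Measure G) (L : Set G) {f f' : G → E} (hf : BM f) (hf' : BM f') :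
    av μ L (fun g => f g - f' g) = av μ L f - av μ L f' := by
  by_cases hL : μ L = ⊤
  · simp [av_top μ L hL]
  rw [av, integral_sub (hf.integrableOn μ hL) (hf'.integrableOn μ hL), smul_sub]; rfl

theorem av_const_mul {𝕜 : Type*} [RCLike 𝕜] (μ : Measure G) (L : Set G) (c : 𝕜) (f : G → 𝕜) :
    av μ L (fun g => c * f g) = c * av μ L f := by
  rw [av, integral_const_mul, ← mul_smul_comm]; rfl

theorem av_mono (μ : Measure G) (L : Set G) {f f' : G → ℝ} (hf : BM f) (hf' : BM f')
    (h : ∀ g, f g ≤ f' g) : av μ L f ≤ av μ L f' := by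
  by_cases hL : μ L = ⊤
  · simp [av_top μ L hL]
  rw [av, av, smul_eq_mul, smul_eq_mul]
  exact mul_le_mul_of_nonneg_left (integral_mono (hf.integrableOn μ hL) (hf'.integrableOn μ hL) h)
    (inv_nonneg.2 ENNReal.toReal_nonneg)

theorem av_nonneg (μ : Measure G) (L : Set G) {f : G → ℝ} (h : ∀ g, 0 ≤ f g) :
    0 ≤ av μ L f := by
  rw [av, smul_eq_mul]
  exact mul_nonneg (inv_nonneg.2 ENNReal.toReal_nonneg) (integral_nonneg h)

theorem norm_av_le (μ : Measure G) (L : Set G) (f : G → E) :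
    ‖av μ L f‖ ≤ av μ L (fun g => ‖f g‖) := by
  rw [av, av, norm_smul, norm_inv, Real.norm_of_nonneg ENNReal.toReal_nonneg, smul_eq_mul]
  gcongr
  exact norm_integral_le_integral_norm _

theorem av_const [CompleteSpace E] (μ : Measure G) (L : Set G) (h : 0 < μ L ∧ μ L < ⊤) (c : E) :
    av μ L (fun _ => c) = c := by
  have : (μ L).toReal ≠ 0 := (ENNReal.toReal_pos h.1.ne' h.2.ne).ne'
  rw [av, setIntegral_const, smul_smul, Measure.real, inv_mul_cancel₀ this, one_smul]

theorem av_const_le (μ : Measure G) (L : Set G) {c : ℝ} (hc : 0 ≤ c) :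
    av μ L (fun _ => c) ≤ c :=
  (le_abs_self _).trans (av_norm_le μ L hc (fun _ => (Real.norm_of_nonneg hc).le))

theorem BM.const [MeasurableSpace E] (c : E) : BM (fun _ : G => c) :=
  ⟨measurable_const, ‖c‖, fun _ => le_rfl⟩

theorem BM.add [MeasurableSpace E] [BorelSpace E] [SecondCountableTopology E]
    {f f' : G → E} (hf : BM f) (hf' : BM f') : BM (fun g => f g + f' g) := by
  obtain ⟨C, hC⟩ := hf.2
  obtain ⟨C', hC'⟩ := hf'.2
  exact ⟨hf.1.add hf'.1, C + C', fun g => (norm_add_le _ _).trans (add_le_add (hC g) (hC' g))⟩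

theorem BM.mul {𝕜 : Type*} [RCLike 𝕜]
    {f f' : G → 𝕜} (hf : BM f) (hf' : BM f') : BM (fun g => f g * f' g) := by
  obtain ⟨C, hC⟩ := hf.2
  obtain ⟨C', hC'⟩ := hf'.2
  refine ⟨hf.1.mul hf'.1, C * C', fun g => ?_⟩
  rw [norm_mul]
  exact mul_le_mul (hC g) (hC' g) (norm_nonneg _) ((norm_nonneg _).trans (hC g))

theorem BM.norm [MeasurableSpace E] [BorelSpace E]
    {f : G → E} (hf : BM f) : BM (fun g => ‖f g‖) := by
  obtain ⟨C, hC⟩ := hf.2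
  exact ⟨hf.1.norm, C, fun g => by rw [norm_norm]; exact hC g⟩

/-- From convergence of averages of squares to convergence of averages. -/
theorem tendsto_av_of_sq (μ : Measure G) (L : ℕ → Set G) (f : ℕ → G → ℝ)
    (hf : ∀ n, BM (f n)) (h0 : ∀ n g, 0 ≤ f n g)
    (h : Tendsto (fun n => av μ (L n) (fun g => f n g ^ 2)) atTop (𝓝 0)) :
    Tendsto (fun n => av μ (L n) (f n)) atTop (𝓝 0) := by
  rw [Metric.tendsto_atTop] at h ⊢
  intro ε hε
  obtain ⟨N, hN⟩ := h ((ε / 2) ^ 2) (by positivity)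
  refine ⟨N, fun n hn => ?_⟩
  have h1 := hN n hn
  rw [Real.dist_eq, sub_zero] at h1 ⊢
  rw [abs_of_nonneg (av_nonneg _ _ (h0 n))]
  have h2 := (le_abs_self _).trans_lt h1
  have hsq : BM (fun g => f n g ^ 2) := by simpa only [sq] using (hf n).mul (hf n)
  have h3 : av μ (L n) (f n) ≤ av μ (L n) (fun g => (ε / 4) + ε⁻¹ * f n g ^ 2) := by
    refine av_mono _ _ (hf n) ((BM.const _).add ((BM.const _).mul hsq)) ?_
    intro g
    have : (ε / 4) + ε⁻¹ * f n g ^ 2 - f n g = ε⁻¹ * (f n g - ε / 2) ^ 2 := by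
      field_simp; ring
    have h5 : 0 ≤ ε⁻¹ * (f n g - ε / 2) ^ 2 := by positivity
    linarith
  rw [av_add _ _ (BM.const _) ((BM.const _).mul hsq), av_const_mul] at h3
  have h4 := av_const_le μ (L n) (c := ε / 4) (by positivity)
  have h5 : ε⁻¹ * av μ (L n) (fun g => f n g ^ 2) < ε⁻¹ * (ε / 2) ^ 2 := by gcongr
  have h6 : ε⁻¹ * (ε / 2) ^ 2 = ε / 4 := by field_simp; ring
  linarith

end AvPart

section ShiftPart

variable {G : Type*} [CommGroup G] [TopologicalSpace G] [IsTopologicalGroup G]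
  [SecondCountableTopology G] [MeasurableSpace G] [BorelSpace G]
variable {E : Type*} [NormedAddCommGroup E] [NormedSpace ℝ E]
  [MeasurableSpace E] [BorelSpace E] [SecondCountableTopology E]

theorem setIntegral_shift (μ : Measure G) [μ.IsMulRightInvariant] (L : Set G) (k : G) (f : G → E) :
    ∫ g in L, f (g * k) ∂μ = ∫ g in L * {k}, f g ∂μ := by
  rw [← (measurePreserving_mul_right μ k).setIntegral_preimage_emb
    (measurableEmbedding_mulRight k) f (L * {k})]
  congr 2
  ext x
  simp

theorem shift_bound (μ : Measure G) [μ.IsMulRightInvariant] {L : Set G} (hL : MeasurableSet L)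
    (hfin : μ L < ⊤) (k : G) {f : G → E} (hf : Measurable f) {C : ℝ} (hC : ∀ g, ‖f g‖ ≤ C) :
    ‖(∫ g in L, f (g * k) ∂μ) - ∫ g in L, f g ∂μ‖ ≤ C * (μ (symmDiff L (L * {k}))).toReal := by
  have hLk : MeasurableSet (L * {k}) := by
    rw [show L * {k} = (fun x => x * k⁻¹) ⁻¹' L by ext x; simp]
    exact measurable_mul_const k⁻¹ hL
  have hfk : μ (L * {k}) < ⊤ := by
    rw [show L * {k} = (fun x => x * k⁻¹) ⁻¹' L by ext x; simp, measure_preimage_mul_right]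
    exact hfin
  have hbm : BM f := ⟨hf, C, hC⟩
  have hsd : μ (symmDiff L (L * {k})) < ⊤ :=
    (measure_mono (Set.symmDiff_subset_union)).trans_lt (measure_union_lt_top hfin hfk)
  rw [setIntegral_shift, ← integral_indicator hL, ← integral_indicator hLk,
    ← integral_sub ((integrable_indicator_iff hLk).2 (hbm.integrableOn μ hfk.ne))
      ((integrable_indicator_iff hL).2 (hbm.integrableOn μ hfin.ne))]
  have h1 : ‖∫ g, ((L * {k}).indicator f g - L.indicator f g) ∂μ‖ ≤
      ∫ g, (symmDiff L (L * {k})).indicator (fun _ => C) g ∂μ := by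
    refine norm_integral_le_of_norm_le ?_ (Eventually.of_forall ?_)
    · exact (integrable_indicator_iff (hL.symmDiff hLk)).2
        ((BM.const C).integrableOn μ hsd.ne)
    · intro g
      by_cases h1 : g ∈ L <;> by_cases h2 : g ∈ L * {k} <;>
        simp only [Set.indicator, h1, h2, Set.mem_symmDiff, if_true, if_false, sub_self, norm_zero,
          sub_zero, zero_sub, norm_neg, not_true, not_false_iff, and_true, and_false, or_false,
          or_true, le_refl, and_self, hC g]
  refine h1.trans ?_
  rw [integral_indicator (hL.symmDiff hLk), setIntegral_const, smul_eq_mul, mul_comm]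
  rfl

theorem av_shift (μ : Measure G) [μ.IsMulRightInvariant] {L : Set G} (hL : MeasurableSet L)
    (hfin : 0 < μ L ∧ μ L < ⊤) (k : G) {f : G → E} (hf : Measurable f) {C : ℝ}
    (hC : ∀ g, ‖f g‖ ≤ C) :
    ‖av μ L (fun g => f (g * k)) - av μ L f‖ ≤
      C * ((μ (symmDiff L (L * {k}))).toReal / (μ L).toReal) := by
  rw [av, av, ← smul_sub, norm_smul, norm_inv, Real.norm_of_nonneg ENNReal.toReal_nonneg]
  have := shift_bound μ hL hfin.2 k hf hC
  have hp : 0 < (μ L).toReal := ENNReal.toReal_pos hfin.1.ne' hfin.2.ne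
  calc _ ≤ (μ L).toReal⁻¹ * (C * (μ (symmDiff L (L * {k}))).toReal) := by gcongr
    _ = _ := by field_simp

/-- Følner sequences -/
structure Fol (μ : Measure G) (L : ℕ → Set G) : Prop where
  meas : ∀ᶠ n in atTop, MeasurableSet (L n)
  fin : ∀ᶠ n in atTop, 0 < μ (L n) ∧ μ (L n) < ⊤
  lim : ∀ g : G, Tendsto
      (fun n => (μ (symmDiff (L n) (L n * {g}))).toReal / (μ (L n)).toReal)
      atTop (𝓝 0)

theorem Fol.shift_tendsto {μ : Measure G} [μ.IsMulRightInvariant] {L : ℕ → Set G} (hL : Fol μ L)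
    (k : G) {f : G → E} (hf : BM f) :
    Tendsto (fun n => av μ (L n) (fun g => f (g * k)) - av μ (L n) f) atTop (𝓝 0) := by
  obtain ⟨C, hC⟩ := hf.2
  have h0 := (hL.lim k).const_mul C
  rw [mul_zero] at h0
  refine squeeze_zero_norm' ?_ h0
  filter_upwards [hL.meas, hL.fin] with n h1 h2
  exact av_shift μ h1 h2 k hf.1 hC

end ShiftPart
open MeasureTheory Filter Topology
open scoped Pointwise ComplexOrder
set_option linter.unusedSectionVars false

section AvMore
variable {G : Type*} [MeasurableSpace G]
variable {E : Type*} [NormedAddCommGroup E] [NormedSpace ℝ E]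

theorem av_norm_le_on (μ : Measure G) (L : Set G) {f : G → E} {C : ℝ} (hC : 0 ≤ C)
    (h : ∀ g ∈ L, ‖f g‖ ≤ C) : ‖av μ L f‖ ≤ C := by
  by_cases hL : μ L = ⊤
  · rw [av_top μ L hL]; simpa
  have := norm_setIntegral_le_of_norm_le_const (μ := μ) (s := L) (f := f) (C := C)
    (lt_top_iff_ne_top.2 hL) h
  rw [av, norm_smul, norm_inv, Real.norm_of_nonneg ENNReal.toReal_nonneg]
  by_cases h0 : (μ L).toReal = 0
  · simpa [h0]
  have hp : 0 < (μ L).toReal := lt_of_le_of_ne ENNReal.toReal_nonneg (Ne.symm h0)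
  calc (μ L).toReal⁻¹ * ‖∫ g in L, f g ∂μ‖ ≤ (μ L).toReal⁻¹ * (C * (μ L).toReal) := by
        gcongr; exact this
    _ = C := by field_simp

theorem av_sum {ι : Type*} (s : Finset ι) (μ : Measure G) (L : Set G) {f : ι → G → ℝ}
    (hf : ∀ i, BM (f i)) :
    av μ L (fun g => ∑ i ∈ s, f i g) = ∑ i ∈ s, av μ L (f i) := by
  by_cases hL : μ L = ⊤
  · simp [av_top μ L hL]
  rw [av, integral_finsetSum _ (fun i _ => (hf i).integrableOn μ hL), Finset.smul_sum]; rfl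

theorem av_ofReal (μ : Measure G) (L : Set G) (f : G → ℝ) :
    av μ L (fun g => (f g : ℂ)) = ((av μ L f : ℝ) : ℂ) := by
  rw [av, av, integral_complex_ofReal]; simp

theorem av_conj (μ : Measure G) (L : Set G) (f : G → ℂ) :
    av μ L (fun g => (starRingEnd ℂ) (f g)) = (starRingEnd ℂ) (av μ L f) := by
  rw [av, av, integral_conj]; simp

theorem BM.conj {f : G → ℂ} (hf : BM f) : BM (fun g => (starRingEnd ℂ) (f g)) := by
  obtain ⟨C, hC⟩ := hf.2
  exact ⟨Complex.continuous_conj.measurable.comp hf.1, C, fun g => by simpa using hC g⟩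

end AvMore

section RepPart

variable {G : Type*} [CommGroup G] [TopologicalSpace G] [IsTopologicalGroup G]
  [SecondCountableTopology G] [MeasurableSpace G] [BorelSpace G]
variable {H : Type*} [NormedAddCommGroup H] [InnerProductSpace ℂ H] [CompleteSpace H]

/-- weakly measurable unitary representations -/
structure URep (U : G → H →L[ℂ] H) : Prop where
  mul : ∀ g h x, U g (U h x) = U (g * h) x
  one : ∀ x, U 1 x = x
  inn : ∀ g x y, (inner ℂ (U g x) (U g y) : ℂ) = inner ℂ x y
  meas : ∀ x y, Measurable fun g => (inner ℂ x (U g y) : ℂ)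

variable {U : G → H →L[ℂ] H}

theorem URep.norm (hU : URep U) (g : G) (x : H) : ‖U g x‖ = ‖x‖ := by
  rw [@norm_eq_sqrt_re_inner ℂ, @norm_eq_sqrt_re_inner ℂ _ _ _ _ x, hU.inn]

theorem URep.comm (hU : URep U) (g h : G) (x : H) : U g (U h x) = U h (U g x) := by
  rw [hU.mul, hU.mul, mul_comm]

theorem URep.inv_apply (hU : URep U) (g : G) (x : H) : U g (U g⁻¹ x) = x := by
  rw [hU.mul, mul_inv_cancel, hU.one]

theorem URep.adj (hU : URep U) (g : G) (x y : H) :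
    (inner ℂ (U g x) y : ℂ) = inner ℂ x (U g⁻¹ y) := by
  conv_lhs => rw [← hU.inv_apply g y]
  rw [hU.inn]

theorem URep.inn2 (hU : URep U) (h k : G) (x y : H) :
    (inner ℂ (U h x) (U k y) : ℂ) = inner ℂ x (U (k * h⁻¹) y) := by
  rw [hU.adj, hU.mul, mul_comm]

theorem URep.bound (hU : URep U) (x y : H) (g : G) : ‖(inner ℂ x (U g y) : ℂ)‖ ≤ ‖x‖ * ‖y‖ := by
  have := norm_inner_le_norm (𝕜 := ℂ) x (U g y)
  rwa [hU.norm] at this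

theorem URep.bm (hU : URep U) (x y : H) : BM fun g => (inner ℂ x (U g y) : ℂ) :=
  ⟨hU.meas x y, ‖x‖ * ‖y‖, hU.bound x y⟩

theorem URep.bm' (hU : URep U) (x y : H) : BM fun g => (inner ℂ (U g y) x : ℂ) := by
  have := (hU.bm x y).conj
  simpa only [inner_conj_symm] using this

theorem URep.flight_inv (hU : URep U) (g : G) {x : H} (hx : x ∈ flightVectors U) :
    U g x ∈ flightVectors U := by
  rw [flightVectors, Submodule.orthogonal_closure] at *
  rw [Submodule.mem_orthogonal] at *
  intro u hu
  have hu' : U g⁻¹ u ∈ Submodule.span ℂ {x : H | x ≠ 0 ∧ ∃ lam : G → ℂ,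
      ∀ g, ‖lam g‖ = 1 ∧ U g x = lam g • x} := by
    induction hu using Submodule.span_induction with
    | mem v hv =>
      obtain ⟨h0, lam, hl⟩ := hv
      rw [(hl _).2]
      exact Submodule.smul_mem _ _ (Submodule.subset_span ⟨h0, lam, hl⟩)
    | zero => simp
    | add v w _ _ h1 h2 => rw [map_add]; exact Submodule.add_mem _ h1 h2
    | smul c v _ h1 => rw [map_smul]; exact Submodule.smul_mem _ _ h1
  have := hx _ hu'
  rwa [hU.adj, inv_inv] at this

theorem ONSet.bessel {s : Finset H} (hs : ONSet s) (x : H) :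
    ∑ e ∈ s, ‖(inner ℂ e x : ℂ)‖ ^ 2 ≤ ‖x‖ ^ 2 := by
  have ho : Orthonormal ℂ (fun e : s => (e : H)) :=
    ⟨fun e => hs.1 e e.2, fun e f hef => hs.2 e e.2 f f.2 (fun h => hef (Subtype.ext h))⟩
  have := ho.sum_inner_products_le x (s := Finset.univ)
  rwa [Finset.sum_coe_sort s (fun e => ‖(inner ℂ e x : ℂ)‖ ^ 2)] at this

theorem URep.wm_core (hU : URep U) {μ : Measure G} [μ.IsMulRightInvariant] {L : ℕ → Set G}
    (hL : Fol μ L) (x : H) {y : H} (hy : y ∈ flightVectors U) :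
    Tendsto (fun n => av μ (L n) (fun g => ‖(inner ℂ x (U g y) : ℂ)‖ ^ 2)) atTop (𝓝 0) := by
  rw [tendsto_iff_ultrafilter]
  intro F hF
  let b : ℕ → H → H → ℂ := fun n v w =>
    av μ (L n) (fun g => (inner ℂ v (U g y) : ℂ) * inner ℂ (U g y) w)
  have hbm : ∀ v w, BM (fun g => (inner ℂ v (U g y) : ℂ) * inner ℂ (U g y) w) :=
    fun v w => (hU.bm v y).mul (hU.bm' w y)
  have hbd : ∀ n v w, ‖b n v w‖ ≤ ‖y‖ ^ 2 * ‖v‖ * ‖w‖ := by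
    intro n v w
    refine av_norm_le _ _ (by positivity) (fun g => ?_)
    rw [norm_mul, norm_inner_symm (U g y) w]
    calc _ ≤ (‖v‖ * ‖y‖) * (‖w‖ * ‖y‖) := by
          gcongr
          · exact hU.bound v y g
          · exact hU.bound w y g
      _ = _ := by ring
  have hex : ∀ v w, ∃ l, Tendsto (fun n => b n v w) F (𝓝 l) := by
    intro v w
    obtain ⟨l, _, hl⟩ := (isCompact_closedBall (0 : ℂ) (‖y‖ ^ 2 * ‖v‖ * ‖w‖)).ultrafilter_le_nhds
      (F.map (fun n => b n v w)) (by
        rw [le_principal_iff]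
        exact Ultrafilter.mem_map.2 (Filter.univ_mem' (fun n => by simpa using hbd n v w)))
    exact ⟨l, hl⟩
  choose B hB using hex
  obtain ⟨T, hT⟩ := exists_op_of_form B (‖y‖ ^ 2)
    (by
      intro v v' w
      refine tendsto_nhds_unique (hB _ _) (((hB v w).add (hB v' w)).congr fun n => ?_)
      simp only [b]
      rw [← av_add _ _ (hbm _ _) (hbm _ _)]
      congr 1; ext g; rw [inner_add_left]; ring)
    (by
      intro c v w
      refine tendsto_nhds_unique (hB _ _) (((hB v w).const_mul _).congr fun n => ?_)
      simp only [b]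
      rw [← av_const_mul]
      congr 1; ext g; rw [inner_smul_left]; ring)
    (by
      intro v w w'
      refine tendsto_nhds_unique (hB _ _) (((hB v w).add (hB v w')).congr fun n => ?_)
      simp only [b]
      rw [← av_add _ _ (hbm _ _) (hbm _ _)]
      congr 1; ext g; rw [inner_add_right]; ring)
    (by
      intro c v w
      refine tendsto_nhds_unique (hB _ _) (((hB v w).const_mul _).congr fun n => ?_)
      simp only [b]
      rw [← av_const_mul]
      congr 1; ext g; rw [inner_smul_right]; ring)
    (fun v w => le_of_tendsto (hB v w).norm (Eventually.of_forall fun n => hbd n v w))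
  have hbreal : ∀ n v, b n v v
      = ((av μ (L n) (fun g => ‖(inner ℂ v (U g y) : ℂ)‖ ^ 2) : ℝ) : ℂ) := by
    intro n v
    simp only [b]
    rw [← av_ofReal]
    congr 1; ext g
    rw [← inner_conj_symm (U g y) v, Complex.mul_conj, Complex.normSq_eq_norm_sq]
  have hre : ∀ v, Tendsto (fun n => av μ (L n) (fun g => ‖(inner ℂ v (U g y) : ℂ)‖ ^ 2)) F
      (𝓝 (inner ℂ v (T v) : ℂ).re) := by
    intro v
    rw [hT]
    refine ((Complex.continuous_re.tendsto _).comp (hB v v)).congr fun n => ?_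
    simp [hbreal]
  have hBsym : ∀ v w, (starRingEnd ℂ) (B w v) = B v w := by
    intro v w
    refine tendsto_nhds_unique ((Complex.continuous_conj.tendsto _).comp (hB w v)) ?_
    refine (hB v w).congr fun n => ?_
    simp only [b, Function.comp]
    rw [← av_conj]
    congr 1; ext g
    rw [map_mul, inner_conj_symm, inner_conj_symm, mul_comm]
  have hBU : ∀ k v w, B (U k v) (U k w) = B v w := by
    intro k v w
    have h1 := (hL.shift_tendsto k⁻¹ (hbm v w)).mono_left hF
    have h2 := (hB v w).add h1
    rw [add_zero] at h2
    refine tendsto_nhds_unique (hB _ _) (h2.congr fun n => ?_)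
    simp only [b]
    rw [add_sub_cancel]
    congr 1; ext g
    rw [hU.inn2, ← inner_conj_symm (U g y) (U k w), hU.inn2, inner_conj_symm]
  have hzero : T = 0 := by
    by_contra hT0
    obtain ⟨v, hv0, ⟨lam, hlam⟩, w, hw⟩ := exists_unimodular_eigenvector U hU.comm hU.norm T
      (by
        intro v w
        rw [← inner_conj_symm, hT, hT, hBsym])
      (fun v => ge_of_tendsto (hre v) (Eventually.of_forall fun n =>
        av_nonneg _ _ fun g => by positivity))
      (‖y‖ ^ 2)
      (by
        intro s hs
        refine le_of_tendsto (tendsto_finsetSum s fun e _ => hre e)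
          (Eventually.of_forall fun n => ?_)
        have hbm2 : ∀ e : H, BM (fun g => ‖(inner ℂ e (U g y) : ℂ)‖ ^ 2) := fun e => by
          simpa only [sq] using (hU.bm e y).norm.mul (hU.bm e y).norm
        rw [← av_sum s _ _ hbm2]
        refine (Real.le_norm_self _).trans (av_norm_le _ _ (C := ‖y‖ ^ 2) (by positivity) fun g => ?_)
        rw [Real.norm_of_nonneg (Finset.sum_nonneg fun _ _ => sq_nonneg _)]
        have := hs.bessel (U g y)
        rwa [hU.norm] at this)
      (by
        intro k w
        refine ext_inner_left ℂ fun v => ?_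
        rw [hT]
        conv_lhs => rw [← hU.inv_apply k v]
        rw [hBU, ← hT, hU.adj, inv_inv])
      hT0
    have hvK : v ∈ (Submodule.span ℂ {x : H | x ≠ 0 ∧ ∃ lam : G → ℂ,
      ∀ g, ‖lam g‖ = 1 ∧ U g x = lam g • x}).topologicalClosure :=
      Submodule.le_topologicalClosure _ (Submodule.subset_span ⟨hv0, lam, hlam⟩)
    have hz : inner ℂ v (T w) = (0 : ℂ) := by
      rw [hT]
      refine tendsto_nhds_unique (hB _ _) (tendsto_const_nhds.congr fun n => ?_)
      have : ∀ g, inner ℂ v (U g y) = (0 : ℂ) := fun g =>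
        (Submodule.mem_orthogonal _ _).1 (hU.flight_inv g hy) v hvK
      simp [b, this, av]
    rw [hw, inner_self_eq_zero] at hz
    exact hv0 hz
  have := hre x
  simpa [hzero] using this

/-- weak mixing on flight vectors -/
theorem URep.wm (hU : URep U) {μ : Measure G} [μ.IsMulRightInvariant] {L : ℕ → Set G}
    (hL : Fol μ L) (x : H) {y : H} (hy : y ∈ flightVectors U) :
    Tendsto (fun n => av μ (L n) (fun g => ‖(inner ℂ x (U g y) : ℂ)‖)) atTop (𝓝 0) :=
  tendsto_av_of_sq μ L (fun _ g => ‖(inner ℂ x (U g y) : ℂ)‖) (fun _ => (hU.bm x y).norm)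
    (fun _ _ => norm_nonneg _) (hU.wm_core hL x hy)

instance flight_proj : (flightVectors U).HasOrthogonalProjection := by
  unfold flightVectors; infer_instance

theorem URep.wm' (hU : URep U) {μ : Measure G} [μ.IsMulRightInvariant] {L : ℕ → Set G}
    (hL : Fol μ L) {x : H} (y : H) (hx : x ∈ flightVectors U) :
    Tendsto (fun n => av μ (L n) (fun g => ‖(inner ℂ x (U g y) : ℂ)‖)) atTop (𝓝 0) := by
  have h := hU.wm hL x ((flightVectors U).starProjection_apply_mem y)
  refine h.congr fun n => ?_
  congr 1; ext g
  have h2 : inner ℂ (U g⁻¹ x) (y - (flightVectors U).starProjection y) = (0 : ℂ) :=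
    (Submodule.mem_orthogonal _ _).1 ((flightVectors U).sub_starProjection_mem_orthogonal y) _
      (hU.flight_inv g⁻¹ hx)
  rw [hU.adj, inv_inv, map_sub, inner_sub_right, sub_eq_zero] at h2
  rw [h2]

theorem URep.dwm (hU : URep U) {μ : Measure G} [μ.IsMulRightInvariant] {L : ℕ → Set G}
    (hL : Fol μ L) (hL' : Fol μ (fun n => (L n)⁻¹ * L n))
    (htemp : ∃ c : ℝ, 0 < c ∧ ∀ᶠ n in atTop, MeasurableSet ((L n)⁻¹ * L n) ∧
      μ ((L n)⁻¹ * L n) ≤ ENNReal.ofReal c * μ (L n))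
    {x : H} (hx : x ∈ flightVectors U) :
    Tendsto (fun n => av μ (L n) (fun h => av μ (L n)
      (fun k => ‖(inner ℂ (U h x) (U k x) : ℂ)‖))) atTop (𝓝 0) := by
  obtain ⟨c, hc, htemp⟩ := htemp
  have h0 := (hU.wm hL' x hx).const_mul c
  rw [mul_zero] at h0
  refine squeeze_zero_norm' ?_ h0
  filter_upwards [htemp, hL.fin, hL'.fin] with n h1 h2 h3
  have hp : 0 < (μ (L n)).toReal := ENNReal.toReal_pos h2.1.ne' h2.2.ne
  have hp' : 0 < (μ ((L n)⁻¹ * L n)).toReal := ENNReal.toReal_pos h3.1.ne' h3.2.ne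
  have hle : (μ ((L n)⁻¹ * L n)).toReal ≤ c * (μ (L n)).toReal := by
    have := ENNReal.toReal_mono (ENNReal.mul_ne_top ENNReal.ofReal_ne_top h2.2.ne) h1.2
    rwa [ENNReal.toReal_mul, ENNReal.toReal_ofReal hc.le] at this
  have hnn : 0 ≤ av μ ((L n)⁻¹ * L n) (fun g => ‖(inner ℂ x (U g x) : ℂ)‖) :=
    av_nonneg _ _ fun _ => norm_nonneg _
  refine av_norm_le_on _ _ (mul_nonneg hc.le hnn) fun h hh => ?_
  rw [Real.norm_of_nonneg (av_nonneg _ _ fun _ => norm_nonneg _)]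
  set f : G → ℝ := fun g => ‖(inner ℂ x (U g x) : ℂ)‖ with hf
  have e1 : av μ (L n) (fun k => ‖(inner ℂ (U h x) (U k x) : ℂ)‖)
      = (μ (L n)).toReal⁻¹ * ∫ g in L n * {h⁻¹}, f g ∂μ := by
    rw [← setIntegral_shift, av, smul_eq_mul]
    simp only [hU.inn2, hf]
  have e2 : ∫ g in L n * {h⁻¹}, f g ∂μ ≤ ∫ g in (L n)⁻¹ * L n, f g ∂μ := by
    refine setIntegral_mono_set ((hU.bm x x).norm.integrableOn μ h3.2.ne)
      (Eventually.of_forall fun g => norm_nonneg _) (LE.le.eventuallyLE ?_)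
    rintro _ ⟨g, hg, k, rfl, rfl⟩
    exact ⟨h⁻¹, by simpa using hh, g, hg, mul_comm _ _⟩
  have e3 : ∫ g in (L n)⁻¹ * L n, f g ∂μ
      = (μ ((L n)⁻¹ * L n)).toReal * av μ ((L n)⁻¹ * L n) f := by
    rw [av, smul_eq_mul]; field_simp
  rw [e1]
  calc _ ≤ (μ (L n)).toReal⁻¹ * ((c * (μ (L n)).toReal) * av μ ((L n)⁻¹ * L n) f) := by
        rw [e3] at e2
        gcongr
        exact e2.trans (by gcongr)
    _ = _ := by field_simp

end RepPart
open MeasureTheory Filter Topology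
open scoped Pointwise ComplexOrder
set_option linter.unusedSectionVars false

section ErgPart

variable {G : Type*} [CommGroup G] [TopologicalSpace G] [IsTopologicalGroup G]
  [SecondCountableTopology G] [MeasurableSpace G] [BorelSpace G]
variable {H : Type*} [NormedAddCommGroup H] [InnerProductSpace ℂ H] [CompleteSpace H]

theorem norm_le_of_inner {v : H} {C : ℝ} (hC : 0 ≤ C)
    (h : ∀ z : H, ‖(inner ℂ z v : ℂ)‖ ≤ C * ‖z‖) : ‖v‖ ≤ C := by
  have h1 := h v
  rw [inner_self_eq_norm_sq_to_K, norm_pow, RCLike.norm_ofReal, abs_norm, sq] at h1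
  by_cases h0 : ‖v‖ = 0
  · rwa [h0]
  · exact le_of_mul_le_mul_right h1 (lt_of_le_of_ne (norm_nonneg _) (Ne.symm h0))

theorem null_closed (D : ℕ → H → ℝ) (C : ℝ) (h0 : ∀ n x, 0 ≤ D n x)
    (hadd : ∀ n x y, D n (x + y) ≤ D n x + D n y)
    (hsmul : ∀ n (c : ℂ) x, D n (c • x) ≤ ‖c‖ * D n x)
    (hbd : ∀ n x, D n x ≤ C * ‖x‖) :
    ∃ W : Submodule ℂ H, IsClosed (W : Set H) ∧
      ∀ x, x ∈ W ↔ Tendsto (fun n => D n x) atTop (𝓝 0) := by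
  let W : Submodule ℂ H :=
    { carrier := {x | Tendsto (fun n => D n x) atTop (𝓝 0)}
      add_mem' := by
        intro x y hx hy
        have := Tendsto.add hx hy
        rw [add_zero] at this
        exact squeeze_zero (fun n => h0 n _) (fun n => hadd n x y) this
      zero_mem' := by
        refine squeeze_zero (fun n => h0 n _) (fun n => hbd n 0) ?_
        simp
      smul_mem' := by
        intro c x hx
        have := Tendsto.const_mul ‖c‖ hx
        rw [mul_zero] at this
        exact squeeze_zero (fun n => h0 n _) (fun n => hsmul n c x) this }
  refine ⟨W, ?_, fun x => Iff.rfl⟩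
  rw [← isSeqClosed_iff_isClosed]
  intro u x hu hx
  change Tendsto (fun n => D n x) atTop (𝓝 0)
  rw [Metric.tendsto_atTop]
  intro ε hε
  have hC : Tendsto (fun i => C * ‖x - u i‖) atTop (𝓝 0) := by
    have : Tendsto (fun i => x - u i) atTop (𝓝 (x - x)) := tendsto_const_nhds.sub hx
    have := this.norm.const_mul C
    simpa using this
  obtain ⟨i, hi⟩ := (hC.eventually (gt_mem_nhds (half_pos hε))).exists
  obtain ⟨N, hN⟩ := Metric.tendsto_atTop.1 (hu i) (ε / 2) (half_pos hε)
  refine ⟨N, fun n hn => ?_⟩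
  have h1 := hN n hn
  rw [Real.dist_0_eq_abs, abs_of_nonneg (h0 _ _)] at h1 ⊢
  have h2 := hadd n (x - u i) (u i)
  rw [sub_add_cancel] at h2
  have h3 := hbd n (x - u i)
  linarith

variable {U : G → H →L[ℂ] H}

theorem URep.exists_avgOp (hU : URep U) (μ : Measure G) :
    ∃ P : Set G → H →L[ℂ] H, ∀ L x y,
      (inner ℂ y (P L x) : ℂ) = av μ L (fun g => (inner ℂ y (U g x) : ℂ)) := by
  have : ∀ L : Set G, ∃ T : H →L[ℂ] H, ∀ y x,
      (inner ℂ y (T x) : ℂ) = av μ L (fun g => (inner ℂ y (U g x) : ℂ)) := by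
    intro L
    refine exists_op_of_form (fun y x => av μ L (fun g => (inner ℂ y (U g x) : ℂ))) 1 ?_ ?_ ?_ ?_ ?_
    · intro v v' w
      simp only [inner_add_left]
      exact av_add _ _ (hU.bm _ _) (hU.bm _ _)
    · intro c v w
      simp only [inner_smul_left]
      exact av_const_mul _ _ _ _
    · intro v w w'
      simp only [map_add, inner_add_right]
      exact av_add _ _ (hU.bm _ _) (hU.bm _ _)
    · intro c v w
      simp only [map_smul, inner_smul_right]
      exact av_const_mul _ _ _ _
    · intro v w
      rw [one_mul]
      exact av_norm_le _ _ (by positivity) (hU.bound v w)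
  choose P hP using this
  exact ⟨P, fun L x y => hP L y x⟩

/-- `P L` is the average of `U` over `L` -/
def IsAvg (μ : Measure G) (U : G → H →L[ℂ] H) (P : Set G → H →L[ℂ] H) : Prop :=
  ∀ L x y, (inner ℂ y (P L x) : ℂ) = av μ L (fun g => (inner ℂ y (U g x) : ℂ))

variable {μ : Measure G} {P : Set G → H →L[ℂ] H}

theorem IsAvg.norm_le (hP : IsAvg μ U P) (hU : URep U) (L : Set G) (x : H) : ‖P L x‖ ≤ ‖x‖ := by
  refine norm_le_of_inner (norm_nonneg _) fun z => ?_
  rw [hP]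
  refine av_norm_le _ _ (by positivity) fun g => ?_
  rw [mul_comm]; exact hU.bound z x g

theorem IsAvg.normsq (hP : IsAvg μ U P) (L : Set G) (x : H) :
    ((‖P L x‖ ^ 2 : ℝ) : ℂ)
      = av μ L (fun g => av μ L (fun k => (inner ℂ (U k x) (U g x) : ℂ))) := by
  have h1 : ((‖P L x‖ ^ 2 : ℝ) : ℂ) = inner ℂ (P L x) (P L x) := by
    rw [inner_self_eq_norm_sq_to_K]; simp
  rw [h1, hP]
  congr 1; ext g
  rw [← inner_conj_symm, hP, ← av_conj]
  simp only [inner_conj_symm]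

theorem IsAvg.shift [μ.IsMulRightInvariant] (hP : IsAvg μ U P) (hU : URep U) {L : Set G}
    (hL : MeasurableSet L) (hfin : 0 < μ L ∧ μ L < ⊤) (k : G) (x : H) :
    ‖P L (U k x) - P L x‖ ≤ ‖x‖ * ((μ (symmDiff L (L * {k}))).toReal / (μ L).toReal) := by
  refine norm_le_of_inner (by positivity) fun z => ?_
  rw [inner_sub_right, hP, hP]
  simp only [hU.mul]
  have := av_shift μ hL hfin k (hU.meas z x) (hU.bound z x)
  refine this.trans (le_of_eq (by ring))

theorem IsAvg.unif [μ.IsMulRightInvariant] (hP : IsAvg μ U P) (hU : URep U) {L M : Set G}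
    (hL : MeasurableSet L) (hfin : 0 < μ L ∧ μ L < ⊤) (hM : 0 < μ M ∧ μ M < ⊤)
    {ε : ℝ} (hε : 0 ≤ ε)
    (h : ∀ g ∈ M, (μ (symmDiff L (L * {g}))).toReal ≤ ε * (μ L).toReal) (x : H) :
    ‖P L x‖ ≤ ‖P M x‖ + ε * ‖x‖ := by
  have h1 : ‖P L x - P L (P M x)‖ ≤ ε * ‖x‖ := by
    refine norm_le_of_inner (by positivity) fun z => ?_
    have e : (inner ℂ z (P L x - P L (P M x)) : ℂ)
        = av μ M (fun g => (inner ℂ z (P L x) : ℂ) - inner ℂ z (P L (U g x))) := by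
      have hb : BM (fun g => (inner ℂ z (P L (U g x)) : ℂ)) := by
        have := hU.bm ((ContinuousLinearMap.adjoint (P L)) z) x
        simpa only [ContinuousLinearMap.adjoint_inner_left] using this
      rw [av_sub _ _ (BM.const _) hb, av_const _ _ hM, inner_sub_right]
      congr 1
      rw [← ContinuousLinearMap.adjoint_inner_left, hP]
      simp only [ContinuousLinearMap.adjoint_inner_left]
    rw [e]
    refine av_norm_le_on _ _ (by positivity) fun g hg => ?_
    rw [← inner_sub_right]
    have hp : 0 < (μ L).toReal := ENNReal.toReal_pos hfin.1.ne' hfin.2.ne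
    have h2 := hP.shift hU hL hfin g x
    have h3 : (μ (symmDiff L (L * {g}))).toReal / (μ L).toReal ≤ ε := by
      rw [div_le_iff₀ hp]; exact h g hg
    calc _ ≤ ‖z‖ * ‖P L x - P L (U g x)‖ := norm_inner_le_norm _ _
      _ ≤ ‖z‖ * (‖x‖ * ε) := by
        rw [norm_sub_rev]
        gcongr
        exact h2.trans (by gcongr)
      _ = _ := by ring
  have h4 : ‖P L x‖ ≤ ‖P L (P M x)‖ + ‖P L x - P L (P M x)‖ := by
    have := norm_add_le (P L (P M x)) (P L x - P L (P M x))
    rwa [add_sub_cancel] at this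
  have := hP.norm_le hU L (P M x)
  linarith

theorem IsAvg.ergodic [μ.IsMulRightInvariant] (hP : IsAvg μ U P) (hU : URep U) {L : ℕ → Set G}
    (hL : Fol μ L) {Ω : H} (hΩ : ‖Ω‖ = 1) (hUΩ : ∀ g, U g Ω = Ω)
    (hinv : ∀ v, (∀ g, U g v = v) → ∃ c : ℂ, v = c • Ω) (x : H) :
    Tendsto (fun n => ‖P (L n) x - (inner ℂ Ω x : ℂ) • Ω‖) atTop (𝓝 0) := by
  obtain ⟨W, hW, hWm⟩ := null_closed (fun n x => ‖P (L n) x - (inner ℂ Ω x : ℂ) • Ω‖) 2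
    (fun _ _ => norm_nonneg _)
    (by
      intro n x y
      refine le_trans (le_of_eq ?_) (norm_add_le _ _)
      congr 1
      rw [map_add, inner_add_right, add_smul]; abel)
    (by
      intro n c x
      rw [← norm_smul, map_smul, inner_smul_right, mul_smul, smul_sub])
    (by
      intro n x
      have h1 := hP.norm_le hU (L n) x
      have h2 : ‖(inner ℂ Ω x : ℂ) • Ω‖ ≤ ‖x‖ := by
        have := norm_inner_le_norm (𝕜 := ℂ) Ω x
        rw [norm_smul, hΩ, mul_one]
        rwa [hΩ, one_mul] at this
      have := norm_sub_le (P (L n) x) ((inner ℂ Ω x : ℂ) • Ω)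
      linarith)
  rw [← hWm]
  have : CompleteSpace W := hW.completeSpace_coe
  suffices W = ⊤ by rw [this]; trivial
  rw [← Submodule.orthogonal_eq_bot_iff, Submodule.eq_bot_iff]
  intro v hv
  rw [Submodule.mem_orthogonal] at hv
  have hΩW : Ω ∈ W := by
    rw [hWm]
    refine tendsto_const_nhds.congr' ?_
    filter_upwards [hL.fin] with n hn
    have : P (L n) Ω = Ω := by
      refine ext_inner_left ℂ fun z => ?_
      rw [hP]
      simp only [hUΩ]
      exact av_const _ _ hn _
    rw [this, inner_self_eq_norm_sq_to_K, hΩ]; simp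
  have hd : ∀ k y, U k y - y ∈ W := by
    intro k y
    rw [hWm]
    have h0 := (hL.lim k).const_mul ‖y‖
    rw [mul_zero] at h0
    refine squeeze_zero' (Eventually.of_forall fun _ => norm_nonneg _) ?_ h0
    filter_upwards [hL.meas, hL.fin] with n h1 h2
    have : (inner ℂ Ω (U k y - y) : ℂ) = 0 := by
      rw [inner_sub_right]
      nth_rewrite 1 [← hUΩ k]
      rw [hU.inn, sub_self]
    rw [this, zero_smul, sub_zero, map_sub]
    exact hP.shift hU h1 h2 k y
  obtain ⟨c, hc⟩ := hinv v (by
    intro g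
    rw [← sub_eq_zero]
    refine ext_inner_left ℂ fun y => ?_
    have := hv _ (hd g⁻¹ y)
    rw [inner_sub_left, hU.adj, inv_inv] at this
    rw [inner_sub_right, this, inner_zero_right])
  have := hv _ hΩW
  rw [hc, inner_smul_right, inner_self_eq_norm_sq_to_K, hΩ] at this
  have : c = 0 := by simpa using this
  rw [hc, this, zero_smul]

end ErgPart
open MeasureTheory Filter Topology
open scoped Pointwise ComplexOrder
set_option linter.unusedSectionVars false

section ClaimC

variable {G : Type*} [CommGroup G] [TopologicalSpace G] [IsTopologicalGroup G]
  [SecondCountableTopology G] [MeasurableSpace G] [BorelSpace G]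
variable {H : Type*} [NormedAddCommGroup H] [InnerProductSpace ℂ H] [CompleteSpace H]
variable {U : G → H →L[ℂ] H} {μ : Measure G} {P : Set G → H →L[ℂ] H}

theorem av_av_eq (μ : Measure G) [SigmaFinite μ] {L : Set G} (hL : μ L ≠ ⊤)
    {F : G × G → ℂ} (hF : BM F) :
    av μ L (fun g => av μ L (fun k => F (g, k)))
      = (((μ L).toReal⁻¹ * (μ L).toReal⁻¹ : ℝ) : ℂ) *
        ∫ p, F p ∂((μ.restrict L).prod (μ.restrict L)) := by
  have : IsFiniteMeasure (μ.restrict L) := ⟨by simpa using hL.lt_top⟩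
  obtain ⟨C, hC⟩ := hF.2
  have hi : Integrable F ((μ.restrict L).prod (μ.restrict L)) :=
    Integrable.of_bound hF.1.aestronglyMeasurable C (Eventually.of_forall hC)
  rw [integral_prod _ hi]
  simp only [av]
  rw [integral_smul, smul_smul, Complex.real_smul]

/-- the component orthogonal to `Ω` of the average -/
noncomputable def qn (P : Set G → H →L[ℂ] H) (Ω : H) (L : Set G) (y : H) : ℝ :=
  ‖P L y - (inner ℂ Ω (P L y) : ℂ) • Ω‖

theorem qn_nonneg (P : Set G → H →L[ℂ] H) (Ω : H) (L : Set G) (y : H) : 0 ≤ qn P Ω L y :=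
  norm_nonneg _

theorem qn_sq {Ω : H} (hΩ : ‖Ω‖ = 1) (L : Set G) (y : H) :
    qn P Ω L y ^ 2 = ‖P L y‖ ^ 2 - ‖(inner ℂ Ω (P L y) : ℂ)‖ ^ 2 := by
  have h0 : (inner ℂ (P L y - (inner ℂ Ω (P L y) : ℂ) • Ω) ((inner ℂ Ω (P L y) : ℂ) • Ω) : ℂ) = 0 := by
    rw [inner_smul_right, inner_sub_left, inner_smul_left, inner_conj_symm,
      inner_self_eq_norm_sq_to_K, hΩ]
    simp
  have h1 := norm_add_sq_eq_norm_sq_add_norm_sq_of_inner_eq_zero _ _ h0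
  rw [sub_add_cancel, norm_smul, hΩ, mul_one] at h1
  rw [qn, sq, sq, sq]
  linarith

theorem qn_le {Ω : H} (hΩ : ‖Ω‖ = 1) (L : Set G) (y : H) : qn P Ω L y ≤ ‖P L y‖ := by
  refine le_of_sq_le_sq ?_ (norm_nonneg _)
  rw [qn_sq hΩ]
  have := sq_nonneg ‖(inner ℂ Ω (P L y) : ℂ)‖
  linarith

theorem meas_PR [SigmaFinite μ] (hP : IsAvg μ U P) (hU : URep U) {R : H →L[ℂ] H}
    (hRm : ∀ x, Measurable fun p : G × G => (inner ℂ (R (U p.1 x)) (U p.2 (R (U p.1 x))) : ℂ))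
    (L : Set G) (x : H) : BM (fun h => ‖P L (R (U h x))‖) := by
  refine ⟨?_, ‖R‖ * ‖x‖, fun h => ?_⟩
  · have h1 : Measurable (fun h => ((‖P L (R (U h x))‖ ^ 2 : ℝ) : ℂ)) := by
      simp only [hP.normsq, hU.inn2]
      have h2 : Measurable (fun p : (G × G) × G =>
          (inner ℂ (R (U p.1.1 x)) (U (p.1.2 * p.2⁻¹) (R (U p.1.1 x))) : ℂ)) :=
        (hRm x).comp (measurable_fst.fst.prodMk (measurable_fst.snd.mul measurable_snd.inv))
      have h3 : Measurable (fun p : G × G => av μ L (fun k =>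
          (inner ℂ (R (U p.1 x)) (U (p.2 * k⁻¹) (R (U p.1 x))) : ℂ))) := by
        simp only [av]
        exact (h2.stronglyMeasurable.integral_prod_right' (ν := μ.restrict L)).measurable.const_smul _
      simp only [av] at h3 ⊢
      exact (h3.stronglyMeasurable.integral_prod_right' (ν := μ.restrict L)).measurable.const_smul _
    have h4 := (Complex.continuous_re.measurable.comp h1).sqrt
    have e : (fun h => ‖P L (R (U h x))‖)
        = fun h => √((Complex.re ∘ fun h => ((‖P L (R (U h x))‖ ^ 2 : ℝ) : ℂ)) h) := by
      ext h
      rw [Function.comp, Complex.ofReal_re, Real.sqrt_sq (norm_nonneg _)]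
    rw [e]
    exact h4
  · rw [norm_norm]
    refine (hP.norm_le hU _ _).trans ((R.le_opNorm _).trans ?_)
    rw [hU.norm]

theorem bm_qn [SigmaFinite μ] (hP : IsAvg μ U P) (hU : URep U) {R : H →L[ℂ] H}
    (hRm : ∀ x, Measurable fun p : G × G => (inner ℂ (R (U p.1 x)) (U p.2 (R (U p.1 x))) : ℂ))
    {Ω : H} (hΩ : ‖Ω‖ = 1)
    (L : Set G) (x : H) : BM (fun h => qn P Ω L (R (U h x))) := by
  have hb := meas_PR hP hU hRm L x
  obtain ⟨C, hC⟩ := hb.2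
  refine ⟨?_, C, fun h => ?_⟩
  · have h2 : Measurable (fun h => (inner ℂ Ω (P L (R (U h x))) : ℂ)) := by
      have := hU.meas ((ContinuousLinearMap.adjoint (P L ∘L R)) Ω) x
      simpa only [ContinuousLinearMap.adjoint_inner_left, ContinuousLinearMap.comp_apply] using this
    have h1 := ((hb.1.pow_const 2).sub (h2.norm.pow_const 2)).sqrt
    have e : (fun h => qn P Ω L (R (U h x)))
        = fun h => √(((fun h => ‖P L (R (U h x))‖ ^ 2)
          - fun h => ‖(inner ℂ Ω (P L (R (U h x))) : ℂ)‖ ^ 2) h) := by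
      ext h
      simp only [Pi.sub_apply]
      rw [← qn_sq hΩ, Real.sqrt_sq (qn_nonneg _ _ _ _)]
    rw [e]
    exact h1
  · have := hC h
    rw [norm_norm] at this
    beta_reduce
    rw [Real.norm_of_nonneg (qn_nonneg _ _ _ _)]
    exact (qn_le hΩ _ _).trans this

theorem flight_lim [SigmaFinite μ] (hP : IsAvg μ U P) (hU : URep U) {R : H →L[ℂ] H}
    (hRm : ∀ x, Measurable fun p : G × G => (inner ℂ (R (U p.1 x)) (U p.2 (R (U p.1 x))) : ℂ))
    {L1 : ℕ → Set G} (hL1 : Fol μ L1) {φ : G → ℂ} {C : ℝ} (hC : ∀ k, ‖φ k‖ ≤ C)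
    (hRl : ∀ k x, Tendsto (fun n => av μ (L1 n)
      (fun h => (inner ℂ (R (U h x)) (U k (R (U h x))) : ℂ))) atTop
      (𝓝 (inner ℂ x (U k x) * φ k)))
    {M : Set G} (hM : μ M ≠ ⊤) (x : H) :
    ∃ l : ℝ, Tendsto (fun n => av μ (L1 n) (fun h => ‖P M (R (U h x))‖ ^ 2)) atTop (𝓝 l) ∧
      l ≤ C * av μ M (fun g => av μ M (fun k => ‖(inner ℂ (U k x) (U g x) : ℂ)‖)) := by
  have : IsFiniteMeasure (μ.restrict M) := ⟨by simpa using hM.lt_top⟩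
  set ν := (μ.restrict M).prod (μ.restrict M) with hν
  set c : ℂ := (((μ M).toReal⁻¹ * (μ M).toReal⁻¹ : ℝ) : ℂ) with hc
  have hK : ∀ h k, ‖(inner ℂ (R (U h x)) (U k (R (U h x))) : ℂ)‖ ≤ (‖R‖ * ‖x‖) * (‖R‖ * ‖x‖) := by
    intro h k
    have h1 : ‖R (U h x)‖ ≤ ‖R‖ * ‖x‖ := by
      have := R.le_opNorm (U h x)
      rwa [hU.norm] at this
    refine (hU.bound _ _ _).trans ?_
    gcongr
  -- Fubini
  have e1 : ∀ n, μ (L1 n) < ⊤ →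
      ((av μ (L1 n) (fun h => ‖P M (R (U h x))‖ ^ 2) : ℝ) : ℂ)
      = c * ∫ p, av μ (L1 n) (fun h =>
          (inner ℂ (R (U h x)) (U (p.1 * p.2⁻¹) (R (U h x))) : ℂ)) ∂ν := by
    intro n hn
    have : IsFiniteMeasure (μ.restrict (L1 n)) := ⟨by simpa using hn⟩
    rw [← av_ofReal]
    have e2 : ∀ h, ((‖P M (R (U h x))‖ ^ 2 : ℝ) : ℂ)
        = c * ∫ p, (inner ℂ (R (U h x)) (U (p.1 * p.2⁻¹) (R (U h x))) : ℂ) ∂ν := by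
      intro h
      rw [hP.normsq]
      simp only [hU.inn2]
      exact av_av_eq μ hM (F := fun p : G × G =>
        (inner ℂ (R (U h x)) (U (p.1 * p.2⁻¹) (R (U h x))) : ℂ))
        ⟨(hU.meas _ _).comp (measurable_fst.mul measurable_snd.inv), _, fun p => hK h _⟩
    simp only [e2]
    rw [av_const_mul]
    congr 1
    simp only [av]
    rw [integral_smul]
    congr 1
    refine integral_integral_swap (Integrable.of_bound (C := (‖R‖ * ‖x‖) * (‖R‖ * ‖x‖)) ?_ ?_)
    · refine Measurable.aestronglyMeasurable ?_
      exact (hRm x).comp (measurable_fst.prodMk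
        (measurable_snd.fst.mul measurable_snd.snd.inv))
    · exact Eventually.of_forall fun p => hK _ _
  have lim : Tendsto (fun n => c * ∫ p, av μ (L1 n) (fun h =>
          (inner ℂ (R (U h x)) (U (p.1 * p.2⁻¹) (R (U h x))) : ℂ)) ∂ν) atTop
      (𝓝 (c * ∫ p : G × G, (inner ℂ x (U (p.1 * p.2⁻¹) x) : ℂ) * φ (p.1 * p.2⁻¹) ∂ν)) := by
    refine Tendsto.const_mul _ ?_
    refine tendsto_integral_of_dominated_convergence (fun _ => (‖R‖ * ‖x‖) * (‖R‖ * ‖x‖)) ?_ ?_ ?_ ?_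
    · intro n
      refine Measurable.aestronglyMeasurable ?_
      have h2 : Measurable (fun p : (G × G) × G =>
          (inner ℂ (R (U p.2 x)) (U (p.1.1 * p.1.2⁻¹) (R (U p.2 x))) : ℂ)) :=
        (hRm x).comp (measurable_snd.prodMk (measurable_fst.fst.mul measurable_fst.snd.inv))
      simp only [av]
      exact (h2.stronglyMeasurable.integral_prod_right'
        (ν := μ.restrict (L1 n))).measurable.const_smul _
    · exact integrable_const _
    · intro n
      exact Eventually.of_forall fun p => av_norm_le _ _ (by positivity) fun h => hK _ _
    · exact Eventually.of_forall fun p => hRl _ _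
  set l := c * ∫ p : G × G, (inner ℂ x (U (p.1 * p.2⁻¹) x) : ℂ) * φ (p.1 * p.2⁻¹) ∂ν with hl
  refine ⟨l.re, ?_, ?_⟩
  · refine ((Complex.continuous_re.tendsto _).comp lim).congr' ?_
    filter_upwards [hL1.fin] with n hn
    simp only [Function.comp]
    rw [← e1 n hn.2, Complex.ofReal_re]
  · refine (Complex.re_le_norm _).trans ?_
    have hFb : BM (fun p : G × G => ((‖(inner ℂ x (U (p.1 * p.2⁻¹) x) : ℂ)‖ : ℝ) : ℂ)) := by
      refine ⟨Complex.measurable_ofReal.comp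
        ((hU.meas _ _).comp (measurable_fst.mul measurable_snd.inv)).norm, ‖x‖ * ‖x‖, fun p => ?_⟩
      rw [Complex.norm_real, norm_norm]
      exact hU.bound _ _ _
    have e3 : ((av μ M (fun g => av μ M (fun k => ‖(inner ℂ (U k x) (U g x) : ℂ)‖)) : ℝ) : ℂ)
        = c * ((∫ p : G × G, ‖(inner ℂ x (U (p.1 * p.2⁻¹) x) : ℂ)‖ ∂ν : ℝ) : ℂ) := by
      rw [← integral_complex_ofReal, hc, ← av_av_eq μ hM hFb, ← av_ofReal]
      congr 1; ext g
      rw [← av_ofReal]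
      simp only [hU.inn2]
    have e4 : av μ M (fun g => av μ M (fun k => ‖(inner ℂ (U k x) (U g x) : ℂ)‖))
        = ((μ M).toReal⁻¹ * (μ M).toReal⁻¹) *
          ∫ p : G × G, ‖(inner ℂ x (U (p.1 * p.2⁻¹) x) : ℂ)‖ ∂ν := by
      rw [hc] at e3
      exact_mod_cast e3
    have hcn : ‖c‖ = (μ M).toReal⁻¹ * (μ M).toReal⁻¹ := by
      rw [hc, Complex.norm_real, Real.norm_of_nonneg (by positivity)]
    rw [hl, norm_mul, e4, hcn]
    have h5 : ‖∫ p : G × G, (inner ℂ x (U (p.1 * p.2⁻¹) x) : ℂ) * φ (p.1 * p.2⁻¹) ∂ν‖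
        ≤ ∫ p : G × G, C * ‖(inner ℂ x (U (p.1 * p.2⁻¹) x) : ℂ)‖ ∂ν := by
      refine norm_integral_le_of_norm_le ?_ (Eventually.of_forall fun p => ?_)
      · refine Integrable.const_mul ?_ _
        exact Integrable.of_bound ((hU.meas _ _).comp
          (measurable_fst.mul measurable_snd.inv)).norm.aestronglyMeasurable (‖x‖ * ‖x‖)
          (Eventually.of_forall fun p => by rw [norm_norm]; exact hU.bound _ _ _)
      · rw [norm_mul, mul_comm]
        gcongr
        exact hC _
    rw [integral_const_mul] at h5
    calc _ ≤ ((μ M).toReal⁻¹ * (μ M).toReal⁻¹) * (C * ∫ p : G × G, ‖(inner ℂ x (U (p.1 * p.2⁻¹) x) : ℂ)‖ ∂ν) := by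
          gcongr
      _ = _ := by ring

theorem claimC [SigmaFinite μ] [μ.IsMulRightInvariant] (hP : IsAvg μ U P) (hU : URep U)
    {R : H →L[ℂ] H}
    (hRm : ∀ x, Measurable fun p : G × G => (inner ℂ (R (U p.1 x)) (U p.2 (R (U p.1 x))) : ℂ))
    {L1 L2 : ℕ → Set G} (hL1 : Fol μ L1) (hL2 : Fol μ L2)
    {φ : G → ℂ} {C : ℝ} (hC : ∀ k, ‖φ k‖ ≤ C)
    (hRl : ∀ k x, Tendsto (fun n => av μ (L1 n)
      (fun h => (inner ℂ (R (U h x)) (U k (R (U h x))) : ℂ))) atTop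
      (𝓝 (inner ℂ x (U k x) * φ k)))
    {Ω : H} (hΩ : ‖Ω‖ = 1) (hUΩ : ∀ g, U g Ω = Ω)
    (hinv : ∀ v, (∀ g, U g v = v) → ∃ c : ℂ, v = c • Ω)
    (hunif : ∀ᶠ m in atTop, ∀ ε > (0 : ℝ), ∀ᶠ n in atTop, ∀ g ∈ L2 m,
      (μ (symmDiff (L2 n) (L2 n * {g}))).toReal ≤ ε * (μ (L2 n)).toReal)
    (hL2' : Fol μ (fun n => (L2 n)⁻¹ * L2 n))
    (htemp : ∃ c : ℝ, 0 < c ∧ ∀ᶠ n in atTop, MeasurableSet ((L2 n)⁻¹ * L2 n) ∧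
      μ ((L2 n)⁻¹ * L2 n) ≤ ENNReal.ofReal c * μ (L2 n)) (x : H) :
    Tendsto (fun n => av μ (L1 n) (fun h => qn P Ω (L2 n) (R (U h x)))) atTop (𝓝 0) := by
  have hPΩ : ∀ᶠ n in atTop, ∀ y, (inner ℂ Ω (P (L2 n) y) : ℂ) = inner ℂ Ω y := by
    filter_upwards [hL2.fin] with n hn y
    rw [hP]
    have : ∀ g, (inner ℂ Ω (U g y) : ℂ) = inner ℂ Ω y := fun g => by
      conv_lhs => rw [← hUΩ g]
      exact hU.inn _ _ _
    simp only [this]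
    exact av_const _ _ hn _
  have hbm := fun n x => bm_qn hP hU hRm hΩ (L2 n) x
  have hRb : ∀ h x, ‖R (U h x)‖ ≤ ‖R‖ * ‖x‖ := fun h x => by
    have := R.le_opNorm (U h x)
    rwa [hU.norm] at this
  obtain ⟨W, hW, hWm⟩ := null_closed
    (fun n x => av μ (L1 n) (fun h => qn P Ω (L2 n) (R (U h x)))) ‖R‖
    (fun n x => av_nonneg _ _ fun _ => norm_nonneg _)
    (by
      intro n x y
      rw [← av_add _ _ (hbm n x) (hbm n y)]
      refine av_mono _ _ (hbm n _) ((hbm n x).add (hbm n y)) fun h => ?_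
      simp only [qn, map_add, inner_add_right, add_smul]
      refine le_trans (le_of_eq ?_) (norm_add_le _ _)
      congr 1; abel)
    (by
      intro n c x
      rw [← av_const_mul]
      refine le_of_eq ?_
      congr 1; ext h
      simp only [qn, map_smul, inner_smul_right]
      rw [mul_smul, ← smul_sub, norm_smul])
    (by
      intro n x
      refine (Real.le_norm_self _).trans (av_norm_le _ _ (by positivity) fun h => ?_)
      rw [Real.norm_of_nonneg (qn_nonneg _ _ _ _)]
      exact (qn_le hΩ _ _).trans ((hP.norm_le hU _ _).trans (hRb h x)))
  have hE : (Submodule.span ℂ {x : H | x ≠ 0 ∧ ∃ lam : G → ℂ,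
      ∀ g, ‖lam g‖ = 1 ∧ U g x = lam g • x}).topologicalClosure ≤ W := by
    refine Submodule.topologicalClosure_minimal _ (Submodule.span_le.2 ?_) hW
    rintro x ⟨-, lam, hlam⟩
    rw [SetLike.mem_coe, hWm]
    have h0 := hP.ergodic hU hL2 hΩ hUΩ hinv (R x)
    refine squeeze_zero' (Eventually.of_forall fun n => av_nonneg _ _ fun _ => norm_nonneg _) ?_ h0
    filter_upwards [hPΩ] with n hn
    refine (Real.le_norm_self _).trans (av_norm_le _ _ (norm_nonneg _) fun h => ?_)
    rw [Real.norm_of_nonneg (qn_nonneg _ _ _ _), (hlam h).2]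
    simp only [qn, map_smul, hn, inner_smul_right]
    rw [mul_smul, ← smul_sub, norm_smul, (hlam h).1, one_mul]
  have hF : ∀ x ∈ flightVectors U, x ∈ W := by
    intro x hx
    rw [hWm]
    have hb2 := fun M => meas_PR hP hU hRm M x
    have hb2' : ∀ M, BM (fun h => ‖P M (R (U h x))‖ ^ 2) := fun M => by
      simpa only [sq] using (hb2 M).mul (hb2 M)
    have key : Tendsto (fun n => av μ (L1 n) (fun h => ‖P (L2 n) (R (U h x))‖ ^ 2))
        atTop (𝓝 0) := by
      set K := ‖R‖ * ‖x‖ with hK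
      have hK0 : 0 ≤ K := by positivity
      have hC0 : 0 ≤ C := (norm_nonneg _).trans (hC 1)
      rw [Metric.tendsto_atTop']
      intro ε hε
      -- choose small parameters
      set δ : ℝ := min 1 (ε / (8 * (K ^ 2 + 1))) with hδ
      have hδ0 : 0 < δ := by positivity
      have hd := hU.dwm hL2 hL2' htemp hx
      have hd' : ∀ᶠ m in atTop, C * av μ (L2 m) (fun h => av μ (L2 m)
        (fun k => ‖(inner ℂ (U k x) (U h x) : ℂ)‖)) < ε / 8 := by
        have := hd.const_mul C
        rw [mul_zero] at this
        simp only [norm_inner_symm (U _ x) (U _ x)] at this ⊢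
        exact this.eventually (gt_mem_nhds (by positivity))
      obtain ⟨m, hm1, hm2, hm3⟩ := (hunif.and (hL2.fin.and hd')).exists
      obtain ⟨l, hl1, hl2⟩ := flight_lim hP hU hRm hL1 hC hRl hm2.2.ne x
      have hl3 := hl1.eventually_lt_const (u := ε / 8) (by linarith)
      have hall := (hm1 δ hδ0).and (hl3.and (hL2.meas.and hL2.fin))
      obtain ⟨N, hN⟩ := eventually_atTop.1 hall
      refine ⟨N, fun n hn => ?_⟩
      obtain ⟨a1, a2, a3, a4⟩ := hN n hn.le
      rw [Real.dist_0_eq_abs, abs_of_nonneg (av_nonneg _ _ fun _ => by positivity)]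
      have hpt : ∀ h, ‖P (L2 n) (R (U h x))‖ ^ 2
          ≤ 2 * ‖P (L2 m) (R (U h x))‖ ^ 2 + 2 * (δ * K) ^ 2 := by
        intro h
        have h1 := hP.unif hU a3 a4 hm2 hδ0.le a1 (R (U h x))
        have h2 : δ * ‖R (U h x)‖ ≤ δ * K := by gcongr; exact hRb h x
        have h3 : ‖P (L2 n) (R (U h x))‖ ≤ ‖P (L2 m) (R (U h x))‖ + δ * K := by linarith
        have h4 := pow_le_pow_left₀ (norm_nonneg _) h3 2
        nlinarith [sq_nonneg (‖P (L2 m) (R (U h x))‖ - δ * K)]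
      have hmono := av_mono μ (L1 n) (hb2' (L2 n))
        (((BM.const (2 : ℝ)).mul (hb2' (L2 m))).add (BM.const (2 * (δ * K) ^ 2))) hpt
      rw [av_add _ _ ((BM.const (2 : ℝ)).mul (hb2' (L2 m))) (BM.const _), av_const_mul] at hmono
      have h5 := av_const_le μ (L1 n) (c := 2 * (δ * K) ^ 2) (by positivity)
      have h6 : δ ^ 2 ≤ δ := by
        have : δ ≤ 1 := min_le_left _ _
        nlinarith
      have h7 : δ * (8 * (K ^ 2 + 1)) ≤ ε := by
        have : δ ≤ ε / (8 * (K ^ 2 + 1)) := min_le_right _ _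
        rwa [le_div_iff₀ (by positivity)] at this
      have h8 : 2 * (δ * K) ^ 2 ≤ ε / 4 := by
        have : δ ^ 2 * K ^ 2 ≤ δ * K ^ 2 := by gcongr
        nlinarith
      linarith
    have key2 := tendsto_av_of_sq μ L1 (fun n h => ‖P (L2 n) (R (U h x))‖) (fun n => hb2 _)
      (fun _ _ => norm_nonneg _) key
    exact squeeze_zero (fun n => av_nonneg _ _ fun _ => norm_nonneg _)
      (fun n => av_mono _ _ (hbm n x) (hb2 _) fun h => qn_le hΩ _ _) key2
  rw [← hWm]
  set K := (Submodule.span ℂ {x : H | x ≠ 0 ∧ ∃ lam : G → ℂ,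
      ∀ g, ‖lam g‖ = 1 ∧ U g x = lam g • x}).topologicalClosure with hKdef
  have : CompleteSpace K := (Submodule.isClosed_topologicalClosure _).completeSpace_coe
  have h1 := K.starProjection_apply_mem x
  have h2 := K.sub_starProjection_mem_orthogonal x
  have h3 := W.add_mem (hE h1) (hF _ h2)
  rwa [add_sub_cancel] at h3

end ClaimC
open MeasureTheory Filter Topology
open scoped Pointwise ComplexOrder
set_option linter.unusedSectionVars false

section FinalH

variable {G : Type*} [CommGroup G] [TopologicalSpace G] [IsTopologicalGroup G]
  [SecondCountableTopology G] [MeasurableSpace G] [BorelSpace G]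
variable {H : Type*} [NormedAddCommGroup H] [InnerProductSpace ℂ H] [CompleteSpace H]
variable {U : G → H →L[ℂ] H} {μ : Measure G}

theorem norm_av_le_av {E : Type*} [NormedAddCommGroup E] [NormedSpace ℝ E]
    {L : Set G} (hL : μ L ≠ ⊤) {f : G → E} {φ : G → ℝ} (hφ : BM φ)
    (h : ∀ g, ‖f g‖ ≤ φ g) : ‖av μ L f‖ ≤ av μ L φ := by
  rw [av, av, norm_smul, norm_inv, Real.norm_of_nonneg ENNReal.toReal_nonneg, smul_eq_mul]
  gcongr
  exact norm_integral_le_of_norm_le (hφ.integrableOn μ hL) (Eventually.of_forall h)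

theorem inner_av {L : Set G} {F : G → H} (hF : IntegrableOn F L μ) (z : H) :
    (inner ℂ z (av μ L F) : ℂ) = av μ L (fun g => (inner ℂ z (F g) : ℂ)) := by
  rw [av, av, integral_inner hF, ← Complex.coe_smul, inner_smul_right, Complex.real_smul]

theorem vdc {L : Set G} (hL : μ L ≠ ⊤) {F : G → H} {Φ : G → G → ℝ}
    (hΦ : ∀ h, BM (Φ h)) (hΦ' : BM (fun h => av μ L (Φ h)))
    (hb : ∀ h k, ‖(inner ℂ (F h) (F k) : ℂ)‖ ≤ Φ h k) :
    ‖av μ L F‖ ^ 2 ≤ av μ L (fun h => av μ L (Φ h)) := by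
  have h0 : ∀ h k, 0 ≤ Φ h k := fun h k => (norm_nonneg _).trans (hb h k)
  by_cases hi : IntegrableOn F L μ
  · have e : ‖av μ L F‖ ^ 2 = ‖(inner ℂ (av μ L F) (av μ L F) : ℂ)‖ := by
      rw [inner_self_eq_norm_sq_to_K, norm_pow, RCLike.norm_ofReal, abs_norm]
    rw [e, inner_av hi]
    refine norm_av_le_av hL hΦ' fun h => ?_
    rw [norm_inner_symm, inner_av hi]
    exact norm_av_le_av hL (hΦ h) (hb h)
  · have : av μ L F = 0 := by rw [av, integral_undef hi, smul_zero]
    rw [this]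
    simp only [norm_zero, ne_eq, OfNat.ofNat_ne_zero, not_false_eq_true, zero_pow]
    exact av_nonneg _ _ fun h => av_nonneg _ _ (h0 h)

theorem finalH [SigmaFinite μ] [μ.IsMulRightInvariant] (hU : URep U)
    {L1 : ℕ → Set G} (hL1 : Fol μ L1) (hL1' : Fol μ (fun n => (L1 n)⁻¹ * L1 n))
    (htemp : ∃ c : ℝ, 0 < c ∧ ∀ᶠ n in atTop, MeasurableSet ((L1 n)⁻¹ * L1 n) ∧
      μ ((L1 n)⁻¹ * L1 n) ≤ ENNReal.ofReal c * μ (L1 n))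
    {z : H} {A : G → ℝ} {K : ℝ} (hA : BM A) (hA0 : ∀ g, 0 ≤ A g) (hAK : ∀ g, A g ≤ K)
    {q : ℕ → G → ℝ} (hq : ∀ n, BM (q n)) (hq0 : ∀ n g, 0 ≤ q n g)
    (hql : Tendsto (fun n => av μ (L1 n) (q n)) atTop (𝓝 0))
    (hdis : Tendsto (fun n => av μ (L1 n) A) atTop (𝓝 0) ∨ z ∈ flightVectors U)
    {C : ℝ} (hC : 0 ≤ C) {F : ℕ → G → H}
    (hF : ∀ᶠ n in atTop, ∀ h k, ‖(inner ℂ (F n h) (F n k) : ℂ)‖ ≤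
      A h * (A k * ‖(inner ℂ (U h z) (U k z) : ℂ)‖) + C * (q n h + q n k)) :
    Tendsto (fun n => av μ (L1 n) (F n)) atTop (𝓝 0) := by
  have hK : 0 ≤ K := (hA0 1).trans (hAK 1)
  have hzz : ∀ h k, ‖(inner ℂ (U h z) (U k z) : ℂ)‖ ≤ ‖z‖ * ‖z‖ := fun h k => by
    rw [hU.inn2]; exact hU.bound _ _ _
  have hN2 : Measurable (fun p : G × G => ‖(inner ℂ (U p.1 z) (U p.2 z) : ℂ)‖) := by
    simp only [hU.inn2]
    exact ((hU.meas z z).comp (measurable_snd.mul measurable_fst.inv)).norm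
  have hN : ∀ h, BM (fun k => ‖(inner ℂ (U h z) (U k z) : ℂ)‖) := fun h => (hU.bm _ _).norm
  have hAN : ∀ h, BM (fun k => A k * ‖(inner ℂ (U h z) (U k z) : ℂ)‖) := fun h => hA.mul (hN h)
  have hNav : ∀ n, BM (fun h => av μ (L1 n) (fun k => ‖(inner ℂ (U h z) (U k z) : ℂ)‖)) := by
    intro n
    refine ⟨?_, ‖z‖ * ‖z‖, fun h => av_norm_le _ _ (by positivity) fun k => by
      rw [norm_norm]; exact hzz h k⟩
    simp only [av, smul_eq_mul]
    exact (hN2.stronglyMeasurable.integral_prod_right' (ν := μ.restrict (L1 n))).measurable.const_mul _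
  have hANav : ∀ n, BM (fun h => av μ (L1 n) (fun k => A k * ‖(inner ℂ (U h z) (U k z) : ℂ)‖)) := by
    intro n
    refine ⟨?_, K * (‖z‖ * ‖z‖), fun h => av_norm_le _ _ (by positivity) fun k => ?_⟩
    · have : Measurable (fun p : G × G => A p.2 * ‖(inner ℂ (U p.1 z) (U p.2 z) : ℂ)‖) :=
        (hA.1.comp measurable_snd).mul hN2
      simp only [av, smul_eq_mul]
      exact (this.stronglyMeasurable.integral_prod_right'
        (ν := μ.restrict (L1 n))).measurable.const_mul _
    · rw [norm_mul, norm_norm, Real.norm_of_nonneg (hA0 k)]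
      gcongr
      · exact hAK k
      · exact hzz h k
  set T : ℕ → ℝ := fun n => av μ (L1 n) (fun h => A h *
    av μ (L1 n) (fun k => A k * ‖(inner ℂ (U h z) (U k z) : ℂ)‖)) with hT
  have hTlim : Tendsto T atTop (𝓝 0) := by
    rcases hdis with hd | hd
    · have h1 := hd.const_mul (K * (‖z‖ * ‖z‖))
      rw [mul_zero] at h1
      refine squeeze_zero (fun n => av_nonneg _ _ fun h => mul_nonneg (hA0 h)
        (av_nonneg _ _ fun k => mul_nonneg (hA0 k) (norm_nonneg _))) (fun n => ?_) h1
      rw [← av_const_mul]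
      refine av_mono _ _ (hA.mul (hANav n)) ((BM.const _).mul hA) fun h => ?_
      rw [mul_comm]
      refine mul_le_mul_of_nonneg_right ?_ (hA0 h)
      refine (Real.le_norm_self _).trans (av_norm_le _ _ (by positivity) fun k => ?_)
      rw [norm_mul, norm_norm, Real.norm_of_nonneg (hA0 k)]
      gcongr
      · exact hAK k
      · exact hzz h k
    · have h1 := (hU.dwm hL1 hL1' htemp hd).const_mul (K * K)
      rw [mul_zero] at h1
      refine squeeze_zero (fun n => av_nonneg _ _ fun h => mul_nonneg (hA0 h)
        (av_nonneg _ _ fun k => mul_nonneg (hA0 k) (norm_nonneg _))) (fun n => ?_) h1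
      rw [← av_const_mul]
      refine av_mono _ _ (hA.mul (hANav n)) ((BM.const _).mul (hNav n)) fun h => ?_
      rw [mul_assoc]
      refine mul_le_mul (hAK h) ?_ (av_nonneg _ _ fun k => mul_nonneg (hA0 k) (norm_nonneg _)) hK
      rw [← av_const_mul]
      refine av_mono _ _ (hAN h) ((BM.const _).mul (hN h)) fun k => ?_
      exact mul_le_mul_of_nonneg_right (hAK k) (norm_nonneg _)
  have hlim : Tendsto (fun n => T n + C * (av μ (L1 n) (q n) + av μ (L1 n) (q n))) atTop (𝓝 0) := by
    have := hTlim.add ((hql.add hql).const_mul C)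
    simpa using this
  have hsq : Tendsto (fun n => ‖av μ (L1 n) (F n)‖ ^ 2) atTop (𝓝 0) := by
    refine squeeze_zero' (Eventually.of_forall fun n => by positivity) ?_ hlim
    filter_upwards [hF, hL1.fin] with n hn hfin
    have e1 : ∀ h, av μ (L1 n) (fun k => A h * (A k * ‖(inner ℂ (U h z) (U k z) : ℂ)‖)
        + C * (q n h + q n k)) = A h * av μ (L1 n) (fun k => A k * ‖(inner ℂ (U h z) (U k z) : ℂ)‖)
          + C * (q n h + av μ (L1 n) (q n)) := by
      intro h
      rw [av_add _ _ ((BM.const _).mul (hAN h)) ((BM.const _).mul ((BM.const _).add (hq n))),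
        av_const_mul, av_const_mul, av_add _ _ (BM.const _) (hq n), av_const _ _ hfin]
    have hB1 : BM (fun h => A h * av μ (L1 n) (fun k => A k * ‖(inner ℂ (U h z) (U k z) : ℂ)‖)) :=
      hA.mul (hANav n)
    have hB2 : BM (fun h => C * (q n h + av μ (L1 n) (q n))) :=
      (BM.const _).mul ((hq n).add (BM.const _))
    have := vdc hfin.2.ne (F := F n) (Φ := fun h k => A h * (A k * ‖(inner ℂ (U h z) (U k z) : ℂ)‖)
        + C * (q n h + q n k))
      (fun h => ((BM.const _).mul (hAN h)).add ((BM.const _).mul ((BM.const _).add (hq n))))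
      (by simp only [e1]; exact hB1.add hB2) hn
    refine this.trans (le_of_eq ?_)
    simp only [e1]
    rw [av_add _ _ hB1 hB2, av_const_mul, av_add _ _ (hq n) (BM.const _), av_const _ _ hfin]
  rw [tendsto_zero_iff_norm_tendsto_zero]
  have := (Real.continuous_sqrt.tendsto 0).comp hsq
  rw [Real.sqrt_zero] at this
  refine this.congr fun n => ?_
  simp only [Function.comp]
  rw [Real.sqrt_sq (norm_nonneg _)]

end FinalH
open MeasureTheory Filter Topology
open scoped Pointwise ComplexOrder
set_option linter.unusedSectionVars false

section Alg

variable {A : Type*} [NormedRing A] [StarRing A] [CStarRing A] [NormedAlgebra ℂ A]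
    [CompleteSpace A] [StarModule ℂ A]

theorem aut_norm (t : A ≃⋆ₐ[ℂ] A) (a : A) : ‖t a‖ = ‖a‖ := by
  letI : CStarAlgebra A := { }
  exact NonUnitalStarAlgHom.norm_map t t.injective a

/-- positivity estimate -/
theorem state_conj_le (ω : A →ₗ[ℂ] ℂ) (hω_pos : ∀ a : A, 0 ≤ ω (star a * a)) (x b : A) :
    (ω (x * (b * star b) * star x)).re ≤ ‖b‖ ^ 2 * (ω (x * star x)).re := by
  letI : CStarAlgebra A := { }
  letI : PartialOrder A := CStarAlgebra.spectralOrder A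
  haveI : StarOrderedRing A := CStarAlgebra.spectralOrderedRing A
  have h1 : x * (b * star b) * star x ≤ ‖b * star b‖ • (x * star x) :=
    CStarAlgebra.star_right_conjugate_le_norm_smul (IsSelfAdjoint.mul_star_self b)
  rw [CStarRing.norm_self_mul_star, ← sq] at h1
  rw [← sub_nonneg] at h1
  obtain ⟨y, hy⟩ := CStarAlgebra.nonneg_iff_eq_star_mul_self.1 h1
  have h2 := hω_pos y
  rw [← hy, map_sub, ← Complex.coe_smul, map_smul] at h2
  have h3 := (Complex.le_def.1 h2).1
  simp only [Complex.zero_re, Complex.sub_re, smul_eq_mul, Complex.re_ofReal_mul] at h3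
  linarith

variable {G : Type*} [CommGroup G] [TopologicalSpace G] [IsTopologicalGroup G]
    [SecondCountableTopology G] [MeasurableSpace G] [BorelSpace G]
variable {H : Type*} [NormedAddCommGroup H] [InnerProductSpace ℂ H] [CompleteSpace H]

/-- the basic data -/
structure Sys (ω : A →ₗ[ℂ] ℂ) (τ : G → A ≃⋆ₐ[ℂ] A) (j : A →ₗ[ℂ] H) (U : G → H →L[ℂ] H) : Prop where
  pos : ∀ a : A, 0 ≤ ω (star a * a)
  one : ω 1 = 1
  tr : ∀ a b : A, ω (a * b) = ω (b * a)
  τone : ∀ a : A, τ 1 a = a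
  τmul : ∀ g h a, τ g (τ h a) = τ (g * h) a
  inv : ∀ g a, ω (τ g a) = ω a
  meas : ∀ a b : A, Measurable fun g : G => ω (a * τ g b)
  dense : DenseRange j
  inn : ∀ a b : A, (inner ℂ (j a) (j b) : ℂ) = ω (star a * b)
  hU : ∀ g a, U g (j a) = j (τ g a)

variable {ω : A →ₗ[ℂ] ℂ} {τ : G → A ≃⋆ₐ[ℂ] A} {j : A →ₗ[ℂ] H} {U : G → H →L[ℂ] H}

theorem Sys.right (S : Sys ω τ j U) (b : A) :
    ∃ R : H →L[ℂ] H, (∀ x, R (j x) = j (x * b)) ∧ ∀ v, ‖R v‖ ≤ ‖b‖ * ‖v‖ := by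
  let f : A →ₗ[ℂ] H := j ∘ₗ LinearMap.mulRight ℂ b
  have hn : ∀ x, ‖f x‖ ≤ ‖b‖ * ‖j x‖ := by
    intro x
    refine le_of_sq_le_sq ?_ (by positivity)
    have e : ∀ y, ‖j y‖ ^ 2 = (ω (star y * y)).re := fun y => by
      rw [← S.inn, ← inner_self_eq_norm_sq (𝕜 := ℂ)]; rfl
    change ‖j (x * b)‖ ^ 2 ≤ _
    rw [mul_pow, e, e, S.tr (star x), S.tr (star _), star_mul, ← mul_assoc, mul_assoc x]
    exact state_conj_le ω S.pos x b
  exact ⟨f.extendOfNorm j, LinearMap.extendOfNorm_eq S.dense ⟨_, hn⟩,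
    LinearMap.norm_extendOfNorm_apply_le S.dense _ hn⟩

theorem Sys.approx (S : Sys ω τ j U) (x : H) : ∃ u : ℕ → A, Tendsto (fun i => j (u i)) atTop (𝓝 x) := by
  obtain ⟨v, hv, hl⟩ := mem_closure_iff_seq_limit.1 (S.dense x)
  choose u hu using hv
  exact ⟨u, by simpa only [hu] using hl⟩

theorem Sys.urep (S : Sys ω τ j U) : URep U where
  mul g h x := by
    refine S.dense.induction_on (p := fun x => U g (U h x) = U (g * h) x) x ?_ ?_
    · exact isClosed_eq (by fun_prop) (by fun_prop)
    · intro a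
      simp only [S.hU, S.τmul]
  one x := by
    refine S.dense.induction_on (p := fun x => U 1 x = x) x ?_ ?_
    · exact isClosed_eq (by fun_prop) (by fun_prop)
    · intro a
      simp only [S.hU, S.τone]
  inn g x y := by
    refine S.dense.induction_on₂ (p := fun x y => (inner ℂ (U g x) (U g y) : ℂ) = inner ℂ x y) ?_ ?_ x y
    · exact isClosed_eq (by fun_prop) (by fun_prop)
    · intro a b
      rw [S.hU, S.hU, S.inn, S.inn, ← map_star, ← map_mul, S.inv]
  meas x y := by
    obtain ⟨u, hu⟩ := S.approx x
    obtain ⟨v, hv⟩ := S.approx y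
    refine measurable_of_tendsto_metrizable (f := fun i g => (inner ℂ (j (u i)) (U g (j (v i))) : ℂ)) ?_ ?_
    · intro i
      simp only [S.hU, S.inn]
      exact S.meas _ _
    · rw [tendsto_pi_nhds]
      intro g
      exact hu.inner (((U g).continuous.tendsto _).comp hv)

theorem Sys.normΩ (S : Sys ω τ j U) : ‖j 1‖ = 1 := by
  have h := S.inn 1 1
  rw [inner_self_eq_norm_sq_to_K, star_one, one_mul, S.one] at h
  have h2 : ‖j 1‖ ^ 2 = 1 := by
    have h3 := congrArg norm h
    rwa [norm_pow, RCLike.norm_ofReal, abs_norm, norm_one] at h3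
  have := norm_nonneg (j 1)
  nlinarith

theorem Sys.UΩ (S : Sys ω τ j U) (g : G) : U g (j 1) = j 1 := by
  rw [S.hU, map_one]

theorem Sys.innΩ (S : Sys ω τ j U) (a : A) : (inner ℂ (j 1) (j a) : ℂ) = ω a := by
  rw [S.inn, star_one, one_mul]

theorem Sys.hinv (S : Sys ω τ j U) {μ : Measure G} {L : ℕ → Set G}
    (hfin : ∀ᶠ n in atTop, 0 < μ (L n) ∧ μ (L n) < ⊤)
    (herg : ∀ a b : A, Tendsto
        (fun n => (μ (L n)).toReal⁻¹ • ∫ g in L n, ω (a * τ g b) ∂μ)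
        atTop (𝓝 (ω a * ω b))) (v : H) (hv : ∀ g, U g v = v) : ∃ c : ℂ, v = c • j 1 := by
  have hU := S.urep
  refine ⟨inner ℂ (j 1) v, ?_⟩
  have key : ∀ a, (inner ℂ (j a) v : ℂ) = inner ℂ (j a) (j 1) * inner ℂ (j 1) v := by
    intro a
    have hall : ∀ y, ‖(inner ℂ (j a) v : ℂ) - inner ℂ (j a) (j 1) * inner ℂ (j 1) y‖
        ≤ ‖j a‖ * ‖v - y‖ := by
      intro y
      refine S.dense.induction_on (p := fun y => ‖(inner ℂ (j a) v : ℂ)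
        - inner ℂ (j a) (j 1) * inner ℂ (j 1) y‖ ≤ ‖j a‖ * ‖v - y‖) y ?_ ?_
      · exact isClosed_le (by fun_prop) (by fun_prop)
      · intro b
        have h1 : Tendsto (fun n => av μ (L n) (fun g => (inner ℂ (j a) (U g (j b)) : ℂ))) atTop
            (𝓝 (inner ℂ (j a) (j 1) * inner ℂ (j 1) (j b))) := by
          simp only [S.hU, S.inn, star_one, one_mul, mul_one]
          exact herg (star a) b
        refine le_of_tendsto (tendsto_const_nhds.sub h1).norm ?_
        filter_upwards [hfin] with n hn
        have h2 : (inner ℂ (j a) v : ℂ) - av μ (L n) (fun g => (inner ℂ (j a) (U g (j b)) : ℂ))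
            = av μ (L n) (fun g => (inner ℂ (j a) (U g (v - j b)) : ℂ)) := by
          simp only [map_sub, inner_sub_right]
          rw [av_sub _ _ (hU.bm _ _) (hU.bm _ _)]
          simp only [hv]
          rw [av_const _ _ hn]
        rw [h2]
        exact av_norm_le _ _ (by positivity) (hU.bound _ _)
    have := hall v
    rw [sub_self, norm_zero, mul_zero, norm_le_zero_iff, sub_eq_zero] at this
    exact this
  refine ext_inner_left ℂ fun z => ?_
  refine S.dense.induction_on (p := fun z => (inner ℂ z v : ℂ) = inner ℂ z
    ((inner ℂ (j 1) v : ℂ) • j 1)) z ?_ ?_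
  · exact isClosed_eq (by fun_prop) (by fun_prop)
  · intro a
    rw [key, inner_smul_right, mul_comm]

theorem Sys.form_eq (S : Sys ω τ j U) {b : A} {R : H →L[ℂ] H} (hR : ∀ x, R (j x) = j (x * b))
    (a : A) (h k : G) : (inner ℂ (R (U h (j a))) (U k (R (U h (j a)))) : ℂ)
      = ω (τ h (star a) * τ (k * h) a * τ k b * star b) := by
  rw [S.hU, hR, S.hU, S.inn, star_mul, map_mul (τ k), S.τmul, mul_assoc, S.tr (star b), map_star]
  simp only [mul_assoc]

theorem Sys.hRm (S : Sys ω τ j U)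
    (hmeas6 : ∀ a₁ a₂ a₃ a₄ a₅ a₆ : A, Measurable fun q : (G × G) × (G × G) =>
      ω (τ q.1.2 a₁ * τ q.1.1 a₂ * τ (q.1.1 * q.1.2) a₃ *
        τ (q.2.1 * q.2.2) a₄ * τ q.2.1 a₅ * τ q.2.2 a₆))
    {b : A} {R : H →L[ℂ] H} (hR : ∀ x, R (j x) = j (x * b)) (x : H) :
    Measurable fun p : G × G => (inner ℂ (R (U p.1 x)) (U p.2 (R (U p.1 x))) : ℂ) := by
  obtain ⟨u, hu⟩ := S.approx x
  refine measurable_of_tendsto_metrizable (f := fun i p =>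
    (inner ℂ (R (U p.1 (j (u i)))) (U p.2 (R (U p.1 (j (u i))))) : ℂ)) ?_ ?_
  · intro i
    simp only [S.form_eq hR]
    have := (hmeas6 (star (u i)) 1 (u i) 1 b (star b)).comp
      (g := fun q : (G × G) × (G × G) => _)
      (f := fun p : G × G => ((p.2, p.1), (p.2, (1 : G)))) (by fun_prop)
    simpa only [Function.comp_def, map_one, mul_one, S.τone] using this
  · rw [tendsto_pi_nhds]
    intro p
    have h1 : Tendsto (fun i => R (U p.1 (j (u i)))) atTop (𝓝 (R (U p.1 x))) :=
      ((R.continuous.comp (U p.1).continuous).tendsto _).comp hu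
    exact h1.inner (((U p.2).continuous.tendsto _).comp h1)

theorem Sys.hRl (S : Sys ω τ j U) {μ : Measure G} [μ.IsMulRightInvariant] {L : ℕ → Set G}
    (hL : Fol μ L) {P : Set G → H →L[ℂ] H} (hP : IsAvg μ U P)
    (hinv : ∀ v, (∀ g, U g v = v) → ∃ c : ℂ, v = c • j 1)
    {b : A} {R : H →L[ℂ] H} (hR : ∀ x, R (j x) = j (x * b))
    (hRm : ∀ x, Measurable fun p : G × G => (inner ℂ (R (U p.1 x)) (U p.2 (R (U p.1 x))) : ℂ))
    (k : G) (x : H) : Tendsto (fun n => av μ (L n)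
      (fun h => (inner ℂ (R (U h x)) (U k (R (U h x))) : ℂ))) atTop
      (𝓝 (inner ℂ x (U k x) * inner ℂ (j b) (U k (j b)))) := by
  have hU := S.urep
  -- the algebraic case
  have halg : ∀ a, Tendsto (fun n => av μ (L n)
      (fun h => (inner ℂ (R (U h (j a))) (U k (R (U h (j a)))) : ℂ))) atTop
      (𝓝 (inner ℂ (j a) (U k (j a)) * inner ℂ (j b) (U k (j b)))) := by
    intro a
    have h0 := hP.ergodic hU hL S.normΩ S.UΩ hinv (j (star a * τ k a))
    rw [← tendsto_iff_norm_sub_tendsto_zero] at h0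
    have h1 := (tendsto_const_nhds (x := j (star (τ k b * star b)))).inner (𝕜 := ℂ) h0
    have e : (inner ℂ (j a) (U k (j a)) * inner ℂ (j b) (U k (j b)) : ℂ)
        = inner ℂ (j (star (τ k b * star b))) ((inner ℂ (j 1) (j (star a * τ k a)) : ℂ) • j 1) := by
      rw [inner_smul_right, S.innΩ, S.hU, S.hU, S.inn, S.inn, S.inn, star_star, mul_one,
        S.tr (star b)]
    rw [e]
    refine h1.congr fun n => ?_
    rw [hP]
    congr 1; ext h
    rw [S.form_eq hR, S.hU, S.inn, star_star, S.tr (τ k b * star b), map_mul (τ h), S.τmul, mul_comm h k]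
    simp only [mul_assoc]
  -- Lipschitz estimates
  obtain ⟨u, hu⟩ := S.approx x
  have hbm : ∀ x, BM (fun h => (inner ℂ (R (U h x)) (U k (R (U h x))) : ℂ)) := by
    intro x
    refine ⟨(hRm x).comp (measurable_id.prodMk measurable_const), (‖R‖ * ‖x‖) * (‖R‖ * ‖x‖),
      fun h => (hU.bound _ _ _).trans ?_⟩
    have h1 : ‖R (U h x)‖ ≤ ‖R‖ * ‖x‖ := by
      have := R.le_opNorm (U h x)
      rwa [hU.norm] at this
    gcongr
  have hlip : ∀ x y n, ‖av μ (L n) (fun h => (inner ℂ (R (U h x)) (U k (R (U h x))) : ℂ))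
      - av μ (L n) (fun h => (inner ℂ (R (U h y)) (U k (R (U h y))) : ℂ))‖
      ≤ ‖R‖ ^ 2 * ((‖x‖ + ‖y‖) * ‖x - y‖) := by
    intro x y n
    rw [← av_sub _ _ (hbm x) (hbm y)]
    refine av_norm_le _ _ (by positivity) fun h => ?_
    have hb : ∀ v, ‖R (U h v)‖ ≤ ‖R‖ * ‖v‖ := fun v => by
      have := R.le_opNorm (U h v)
      rwa [hU.norm] at this
    have e : (inner ℂ (R (U h x)) (U k (R (U h x))) : ℂ) - inner ℂ (R (U h y)) (U k (R (U h y)))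
        = inner ℂ (R (U h x)) (U k (R (U h (x - y)))) + inner ℂ (R (U h (x - y))) (U k (R (U h y))) := by
      simp only [map_sub, inner_sub_left, inner_sub_right]; ring
    rw [e]
    refine (norm_add_le _ _).trans ?_
    have h1 := hU.bound (R (U h x)) (R (U h (x - y))) k
    have h2 := hU.bound (R (U h (x - y))) (R (U h y)) k
    have h3 : ‖R (U h x)‖ * ‖R (U h (x - y))‖ ≤ (‖R‖ * ‖x‖) * (‖R‖ * ‖x - y‖) := by
      gcongr
      · exact hb _
      · exact hb _
    have h4 : ‖R (U h (x - y))‖ * ‖R (U h y)‖ ≤ (‖R‖ * ‖x - y‖) * (‖R‖ * ‖y‖) := by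
      gcongr
      · exact hb _
      · exact hb _
    calc _ ≤ (‖R‖ * ‖x‖) * (‖R‖ * ‖x - y‖) + (‖R‖ * ‖x - y‖) * (‖R‖ * ‖y‖) :=
          add_le_add (h1.trans h3) (h2.trans h4)
      _ = _ := by ring
  have hlim : Tendsto (fun i => (inner ℂ (j (u i)) (U k (j (u i))) * inner ℂ (j b) (U k (j b)) : ℂ))
      atTop (𝓝 (inner ℂ x (U k x) * inner ℂ (j b) (U k (j b)))) :=
    (hu.inner (((U k).continuous.tendsto _).comp hu)).mul_const _
  have hz : Tendsto (fun i => ‖R‖ ^ 2 * ((‖x‖ + ‖j (u i)‖) * ‖x - j (u i)‖)) atTop (𝓝 0) := by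
    have h1 : Tendsto (fun i => ‖x - j (u i)‖) atTop (𝓝 0) := by
      have := (tendsto_const_nhds (x := x)).sub hu
      simpa using this.norm
    have := (((tendsto_const_nhds (x := ‖x‖)).add hu.norm).mul h1).const_mul (‖R‖ ^ 2)
    simpa using this
  rw [Metric.tendsto_atTop]
  intro ε hε
  have hε3 : 0 < ε / 3 := by positivity
  obtain ⟨i, hi1, hi2⟩ := ((hz.eventually_lt_const hε3).and
    (hlim.eventually (Metric.ball_mem_nhds _ hε3))).exists
  obtain ⟨N, hN⟩ := Metric.tendsto_atTop.1 (halg (u i)) (ε / 3) hε3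
  refine ⟨N, fun n hn => ?_⟩
  have h1 := (hlip x (j (u i)) n).trans_lt hi1
  rw [← dist_eq_norm] at h1
  have h2 := hN n hn
  exact (dist_triangle4 _ _ _ _).trans_lt (by linarith)

end Alg
open MeasureTheory Filter Topology
open scoped Pointwise ComplexOrder
set_option linter.unusedSectionVars false

section Fin

theorem inner_split {H : Type*} [NormedAddCommGroup H] [InnerProductSpace ℂ H]
    {α β : ℂ} {s t r r' : H} {K M q q' : ℝ} (hK : ‖α‖ ≤ K) (hM : 0 ≤ M)
    (hs : ‖s‖ ≤ M) (hr : ‖r‖ ≤ M * q) (hr' : ‖r'‖ ≤ M * q') (hv : ‖β • t + r'‖ ≤ M * K) :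
    ‖(inner ℂ (α • s + r) (β • t + r') : ℂ)‖ ≤
      ‖α‖ * (‖β‖ * ‖(inner ℂ s t : ℂ)‖) + K * M ^ 2 * (q + q') := by
  have e : (inner ℂ (α • s + r) (β • t + r') : ℂ) = inner ℂ (α • s) (β • t)
      + inner ℂ (α • s) r' + inner ℂ r (β • t + r') := by
    rw [inner_add_left, inner_add_right (α • s)]
  have hK0 : 0 ≤ K := (norm_nonneg _).trans hK
  have h1 : ‖(inner ℂ (α • s) (β • t) : ℂ)‖ = ‖α‖ * (‖β‖ * ‖(inner ℂ s t : ℂ)‖) := by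
    rw [inner_smul_left, inner_smul_right, norm_mul, norm_mul, RCLike.norm_conj]
  have h2 : ‖(inner ℂ (α • s) r' : ℂ)‖ ≤ (K * M) * (M * q') := by
    refine (norm_inner_le_norm _ _).trans ?_
    rw [norm_smul]
    gcongr
  have h3 : ‖(inner ℂ r (β • t + r') : ℂ)‖ ≤ (M * q) * (M * K) := by
    refine (norm_inner_le_norm _ _).trans ?_
    have : 0 ≤ M * q := (norm_nonneg _).trans hr
    gcongr
  rw [e]
  calc _ ≤ ‖(inner ℂ (α • s) (β • t) : ℂ)‖ + ‖(inner ℂ (α • s) r' : ℂ)‖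
        + ‖(inner ℂ r (β • t + r') : ℂ)‖ := norm_add₃_le
    _ ≤ ‖α‖ * (‖β‖ * ‖(inner ℂ s t : ℂ)‖) + (K * M) * (M * q') + (M * q) * (M * K) := by
        rw [h1]; gcongr
    _ = _ := by ring

variable {A : Type*} [NormedRing A] [StarRing A] [CStarRing A] [NormedAlgebra ℂ A]
    [CompleteSpace A] [StarModule ℂ A]
variable {G : Type*} [CommGroup G] [TopologicalSpace G] [IsTopologicalGroup G]
    [SecondCountableTopology G] [MeasurableSpace G] [BorelSpace G]
variable {H : Type*} [NormedAddCommGroup H] [InnerProductSpace ℂ H] [CompleteSpace H]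
variable {ω : A →ₗ[ℂ] ℂ} {τ : G → A ≃⋆ₐ[ℂ] A} {j : A →ₗ[ℂ] H} {U : G → H →L[ℂ] H}

theorem Sys.main (S : Sys ω τ j U) {μ : Measure G} [SigmaFinite μ] [μ.IsMulRightInvariant]
    (hinv : ∀ v, (∀ g, U g v = v) → ∃ c : ℂ, v = c • j 1)
    (hmeas6 : ∀ a₁ a₂ a₃ a₄ a₅ a₆ : A, Measurable fun q : (G × G) × (G × G) =>
      ω (τ q.1.2 a₁ * τ q.1.1 a₂ * τ (q.1.1 * q.1.2) a₃ *
        τ (q.2.1 * q.2.2) a₄ * τ q.2.1 a₅ * τ q.2.2 a₆))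
    {L1 L2 : ℕ → Set G} (hL1 : Fol μ L1) (hL2 : Fol μ L2)
    (hL1' : Fol μ (fun n => (L1 n)⁻¹ * L1 n)) (hL2' : Fol μ (fun n => (L2 n)⁻¹ * L2 n))
    (htemp1 : ∃ c : ℝ, 0 < c ∧ ∀ᶠ n in atTop, MeasurableSet ((L1 n)⁻¹ * L1 n) ∧
      μ ((L1 n)⁻¹ * L1 n) ≤ ENNReal.ofReal c * μ (L1 n))
    (hunif : ∀ᶠ m in atTop, ∀ ε > (0 : ℝ), ∀ᶠ n in atTop, ∀ g ∈ L2 m,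
      (μ (symmDiff (L2 n) (L2 n * {g}))).toReal ≤ ε * (μ (L2 n)).toReal)
    (htemp2 : ∃ c : ℝ, 0 < c ∧ ∀ᶠ n in atTop, MeasurableSet ((L2 n)⁻¹ * L2 n) ∧
      μ ((L2 n)⁻¹ * L2 n) ≤ ENNReal.ofReal c * μ (L2 n))
    (a b c : A)
    (hflight : j a ∈ flightVectors U ∨ j b ∈ flightVectors U ∨ j (star c) ∈ flightVectors U) :
    Tendsto (fun n => av μ (L1 n) (fun h => av μ (L2 n)
      (fun g => j (τ (g * h) a * τ g b * τ h c)))) atTop (𝓝 0) := by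
  have hU := S.urep
  obtain ⟨P, hP'⟩ := hU.exists_avgOp μ
  have hP : IsAvg μ U P := hP'
  obtain ⟨R, hR, hRn⟩ := S.right b
  choose Rc hRc hRcn using fun h => S.right (τ h c)
  have hRm := S.hRm hmeas6 hR
  set Ω := j 1 with hΩdef
  have hΩ : ‖Ω‖ = 1 := S.normΩ
  have hφ : ∀ k, ‖(inner ℂ (j b) (U k (j b)) : ℂ)‖ ≤ ‖j b‖ * ‖j b‖ := hU.bound _ _
  have hql := claimC hP hU hRm hL1 hL2 hφ (S.hRl hL1 hP hinv hR hRm) hΩ S.UΩ hinv hunif hL2'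
    htemp2 (j a)
  -- the scalar coefficients
  have hAeq : ∀ h, (inner ℂ Ω (R (U h (j a))) : ℂ)
      = inner ℂ (ContinuousLinearMap.adjoint R Ω) (U h (j a)) := fun h => by
    rw [ContinuousLinearMap.adjoint_inner_left]
  have hy : ∀ h, ‖R (U h (j a))‖ ≤ ‖b‖ * ‖j a‖ := fun h => by
    have := hRn (U h (j a))
    rwa [hU.norm] at this
  have hAbm : BM (fun h => ‖(inner ℂ Ω (R (U h (j a))) : ℂ)‖) := by
    simp only [hAeq]
    exact (hU.bm _ _).norm
  have hAK : ∀ h, ‖(inner ℂ Ω (R (U h (j a))) : ℂ)‖ ≤ ‖b‖ * ‖j a‖ := fun h => by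
    refine (norm_inner_le_norm _ _).trans ?_
    rw [hΩ, one_mul]
    exact hy h
  refine finalH hU hL1 hL1' htemp1 (z := j (star c)) hAbm (fun _ => norm_nonneg _) hAK
    (q := fun n h => qn P Ω (L2 n) (R (U h (j a))))
    (fun n => bm_qn hP hU hRm hΩ (L2 n) (j a)) (fun n h => qn_nonneg _ _ _ _) hql ?_
    (C := ‖b‖ * ‖j a‖ * ‖c‖ ^ 2) (by positivity) ?_
  · rcases hflight with hf | hf | hf
    · left
      simp only [hAeq]
      exact hU.wm hL1 _ hf
    · left
      refine (hU.wm' hL1 (j (star a)) hf).congr fun n => ?_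
      congr 1; ext h
      rw [norm_inner_symm]
      congr 1
      rw [S.hU, S.hU, hR, S.inn, S.innΩ, map_star, star_star]
    · exact Or.inr hf
  · filter_upwards [hL2.fin] with n hn h k
    have hPΩ : ∀ y, (inner ℂ Ω (P (L2 n) y) : ℂ) = inner ℂ Ω y := by
      intro y
      rw [hP]
      have : ∀ g, (inner ℂ Ω (U g y) : ℂ) = inner ℂ Ω y := fun g => by
        conv_lhs => rw [hΩdef, ← S.UΩ g]
        exact hU.inn _ _ _
      simp only [this]
      exact av_const _ _ hn _
    have hx : ∀ h g, j (τ (g * h) a * τ g b * τ h c) = Rc h (U g (R (U h (j a)))) := by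
      intro h g
      rw [S.hU, hR, S.hU, hRc, map_mul (τ g), S.τmul]
    have hF : ∀ h, av μ (L2 n) (fun g => j (τ (g * h) a * τ g b * τ h c)) = 0 ∨
        av μ (L2 n) (fun g => j (τ (g * h) a * τ g b * τ h c)) = Rc h (P (L2 n) (R (U h (j a)))) := by
      intro h
      by_cases hi : IntegrableOn (fun g => j (τ (g * h) a * τ g b * τ h c)) (L2 n) μ
      · right
        refine ext_inner_left ℂ fun z => ?_
        rw [inner_av hi, ← ContinuousLinearMap.adjoint_inner_left, hP]
        simp only [hx, ContinuousLinearMap.adjoint_inner_left]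
      · left
        rw [av, integral_undef hi, smul_zero]
    have hnn : 0 ≤ ‖(inner ℂ Ω (R (U h (j a))) : ℂ)‖ * (‖(inner ℂ Ω (R (U k (j a))) : ℂ)‖ *
        ‖(inner ℂ (U h (j (star c))) (U k (j (star c))) : ℂ)‖) + ‖b‖ * ‖j a‖ * ‖c‖ ^ 2 *
        (qn P Ω (L2 n) (R (U h (j a))) + qn P Ω (L2 n) (R (U k (j a)))) := by
      have h1 := qn_nonneg P Ω (L2 n) (R (U h (j a)))
      have h2 := qn_nonneg P Ω (L2 n) (R (U k (j a)))
      positivity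
    rcases hF h with h0 | h0
    · rw [h0, inner_zero_left, norm_zero]; exact hnn
    rcases hF k with h1 | h1
    · rw [h1, inner_zero_right, norm_zero]; exact hnn
    rw [h0, h1]
    have hdec : ∀ h, Rc h (P (L2 n) (R (U h (j a)))) =
        (inner ℂ Ω (R (U h (j a))) : ℂ) • j (τ h c) +
          Rc h (P (L2 n) (R (U h (j a))) - (inner ℂ Ω (P (L2 n) (R (U h (j a)))) : ℂ) • Ω) := by
      intro h
      rw [map_sub, map_smul, hPΩ, hΩdef, hRc, one_mul]
      abel
    have hr : ∀ h, ‖Rc h (P (L2 n) (R (U h (j a))) -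
        (inner ℂ Ω (P (L2 n) (R (U h (j a)))) : ℂ) • Ω)‖ ≤ ‖c‖ * qn P Ω (L2 n) (R (U h (j a))) := by
      intro h
      have := hRcn h (P (L2 n) (R (U h (j a))) - (inner ℂ Ω (P (L2 n) (R (U h (j a)))) : ℂ) • Ω)
      rwa [aut_norm] at this
    have hs : ‖j (τ h c)‖ ≤ ‖c‖ := by
      have := hRcn h Ω
      rwa [aut_norm, hΩ, mul_one, hΩdef, hRc, one_mul] at this
    have hv : ‖Rc k (P (L2 n) (R (U k (j a))))‖ ≤ ‖c‖ * (‖b‖ * ‖j a‖) := by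
      have h2 := hRcn k (P (L2 n) (R (U k (j a))))
      rw [aut_norm] at h2
      refine h2.trans ?_
      gcongr
      exact (hP.norm_le hU _ _).trans (hy k)
    rw [hdec k] at hv
    rw [hdec h, hdec k]
    have hst : ‖(inner ℂ (U h (j (star c))) (U k (j (star c))) : ℂ)‖
        = ‖(inner ℂ (j (τ h c)) (j (τ k c)) : ℂ)‖ := by
      rw [norm_inner_symm, S.hU, S.hU, S.inn, S.inn, map_star, map_star, star_star, S.tr]
    rw [hst]
    exact inner_split (hAK h) (norm_nonneg _) hs (hr h) (hr k) hv

end Fin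

/-- **Corollary 5.4(1).** -/
theorem cor_5_4_1
    -- a unital C*-algebra A
    {A : Type*} [NormedRing A] [StarRing A] [CStarRing A] [NormedAlgebra ℂ A]
    [CompleteSpace A] [StarModule ℂ A]
    -- a tracial state ω on A
    (ω : A →ₗ[ℂ] ℂ) (hω_pos : ∀ a : A, 0 ≤ ω (star a * a)) (hω_one : ω 1 = 1)
    (hω_tracial : ∀ a b : A, ω (a * b) = ω (b * a))
    -- a second countable topological abelian group G with a σ-finite, right and left
    -- invariant measure μ on its Borel σ-algebra, with the inverse map μ-invariant
    {G : Type*} [CommGroup G] [TopologicalSpace G] [IsTopologicalGroup G]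
    [SecondCountableTopology G] [MeasurableSpace G] [BorelSpace G]
    (μ : Measure G) [SigmaFinite μ]
    (hRight : ∀ (V : Set G) (g : G), MeasurableSet V → μ (V * {g}) = μ V)
    (hLeft : ∀ (V : Set G) (g : G), MeasurableSet V → μ ({g} * V) = μ V)
    (hInvInv : ∀ V : Set G, MeasurableSet V → μ V⁻¹ = μ V)
    -- the action τ, making (A, ω, τ, G) a C*-dynamical system
    (τ : G → A ≃⋆ₐ[ℂ] A)
    (hτ_one : ∀ a : A, τ 1 a = a)
    (hτ_mul : ∀ g h a, τ g (τ h a) = τ (g * h) a)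
    (hω_inv : ∀ g a, ω (τ g a) = ω a)
    (hτ_meas : ∀ a b : A, Measurable fun g : G => ω (a * τ g b))
    -- the system is ergodic (w.r.t. some, equivalently every, Følner sequence in G)
    (hErg : ∃ Λ : ℕ → Set G, (∀ n, MeasurableSet (Λ n)) ∧
      (∀ᶠ n in atTop, 0 < μ (Λ n) ∧ μ (Λ n) < ⊤) ∧
      (∀ g : G, Tendsto
        (fun n => (μ (symmDiff (Λ n) (Λ n * {g}))).toReal / (μ (Λ n)).toReal)
        atTop (𝓝 0)) ∧
      ∀ a b : A, Tendsto
        (fun n => (μ (Λ n)).toReal⁻¹ • ∫ g in Λ n, ω (a * τ g b) ∂μ)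
        atTop (𝓝 (ω a * ω b)))
    -- (g,h,j,k) ↦ ω(τ_h(a₁) τ_g(a₂) τ_{gh}(a₃) τ_{jk}(a₄) τ_j(a₅) τ_k(a₆)) is
    -- Σ² × Σ²-measurable
    (hmeas6 : ∀ a₁ a₂ a₃ a₄ a₅ a₆ : A, Measurable fun q : (G × G) × (G × G) =>
      ω (τ q.1.2 a₁ * τ q.1.1 a₂ * τ (q.1.1 * q.1.2) a₃ *
        τ (q.2.1 * q.2.2) a₄ * τ q.2.1 a₅ * τ q.2.2 a₆))
    -- a uniform Følner sequence (Λ1 n) in G ...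
    (Λ1 : ℕ → Set G)
    (hΛ1meas : ∀ n, MeasurableSet (Λ1 n))
    (hΛ1fin : ∀ᶠ n in atTop, 0 < μ (Λ1 n) ∧ μ (Λ1 n) < ⊤)
    (hΛ1folner : ∀ g : G, Tendsto
      (fun n => (μ (symmDiff (Λ1 n) (Λ1 n * {g}))).toReal / (μ (Λ1 n)).toReal)
      atTop (𝓝 0))
    (hΛ1unif : ∀ᶠ m in atTop, ∀ ε > (0 : ℝ), ∀ᶠ n in atTop, ∀ g ∈ Λ1 m,
      (μ (symmDiff (Λ1 n) (Λ1 n * {g}))).toReal ≤ ε * (μ (Λ1 n)).toReal)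
    -- ... satisfying the Tempel'man condition ...
    (hΛ1temp : ∃ c : ℝ, 0 < c ∧ ∀ᶠ n in atTop, MeasurableSet ((Λ1 n)⁻¹ * Λ1 n) ∧
      μ ((Λ1 n)⁻¹ * Λ1 n) ≤ ENNReal.ofReal c * μ (Λ1 n))
    -- ... and such that (Λ1 n⁻¹ Λ1 n) is also Følner in G
    (hΛ1invfin : ∀ᶠ n in atTop, 0 < μ ((Λ1 n)⁻¹ * Λ1 n) ∧ μ ((Λ1 n)⁻¹ * Λ1 n) < ⊤)
    (hΛ1invfolner : ∀ g : G, Tendsto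
      (fun n => (μ (symmDiff ((Λ1 n)⁻¹ * Λ1 n) (((Λ1 n)⁻¹ * Λ1 n) * {g}))).toReal /
        (μ ((Λ1 n)⁻¹ * Λ1 n)).toReal)
      atTop (𝓝 0))
    -- a uniform Følner sequence (Λ2 n) in G ...
    (Λ2 : ℕ → Set G)
    (hΛ2meas : ∀ n, MeasurableSet (Λ2 n))
    (hΛ2fin : ∀ᶠ n in atTop, 0 < μ (Λ2 n) ∧ μ (Λ2 n) < ⊤)
    (hΛ2folner : ∀ g : G, Tendsto
      (fun n => (μ (symmDiff (Λ2 n) (Λ2 n * {g}))).toReal / (μ (Λ2 n)).toReal)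
      atTop (𝓝 0))
    (hΛ2unif : ∀ᶠ m in atTop, ∀ ε > (0 : ℝ), ∀ᶠ n in atTop, ∀ g ∈ Λ2 m,
      (μ (symmDiff (Λ2 n) (Λ2 n * {g}))).toReal ≤ ε * (μ (Λ2 n)).toReal)
    -- ... satisfying the Tempel'man condition ...
    (hΛ2temp : ∃ c : ℝ, 0 < c ∧ ∀ᶠ n in atTop, MeasurableSet ((Λ2 n)⁻¹ * Λ2 n) ∧
      μ ((Λ2 n)⁻¹ * Λ2 n) ≤ ENNReal.ofReal c * μ (Λ2 n))
    -- ... and such that (Λ2 n⁻¹ Λ2 n) is also Følner in G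
    (hΛ2invfin : ∀ᶠ n in atTop, 0 < μ ((Λ2 n)⁻¹ * Λ2 n) ∧ μ ((Λ2 n)⁻¹ * Λ2 n) < ⊤)
    (hΛ2invfolner : ∀ g : G, Tendsto
      (fun n => (μ (symmDiff ((Λ2 n)⁻¹ * Λ2 n) (((Λ2 n)⁻¹ * Λ2 n) * {g}))).toReal /
        (μ ((Λ2 n)⁻¹ * Λ2 n)).toReal)
      atTop (𝓝 0))
    -- a GNS representation (H, j) of (A, ω)
    {H : Type*} [NormedAddCommGroup H] [InnerProductSpace ℂ H] [CompleteSpace H]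
    (j : A →ₗ[ℂ] H) (hj_dense : DenseRange j)
    (hj_inner : ∀ a b : A, (inner ℂ (j a) (j b) : ℂ) = ω (star a * b))
    (U : G → H →L[ℂ] H) (hU : ∀ g a, U g (j a) = j (τ g a)) (hU_contr : ∀ g, ‖U g‖ ≤ 1)
    -- a, b, c ∈ A with at least one of ι(a), ι(b), ι(c*) a flight vector
    (a b c : A)
    (hflight : j a ∈ flightVectors U ∨ j b ∈ flightVectors U ∨ j (star c) ∈ flightVectors U)
    -- the system is asymptotically abelian with respect to (Λ1 n)
    (hcomm_meas : ∀ a b : A, Measurable fun g : G => ‖a * τ g b - τ g b * a‖)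
    (hAA : ∀ a b : A, Tendsto
      (fun n => (μ (Λ1 n)).toReal⁻¹ * ∫ g in Λ1 n, ‖a * τ g b - τ g b * a‖ ∂μ)
      atTop (𝓝 0))
 :
    -- conclusion
    Tendsto
      (fun n => ((μ (Λ1 n)).toReal * (μ (Λ2 n)).toReal)⁻¹ •
        ∫ h in Λ1 n, ∫ g in Λ2 n, j (τ (g * h) a * τ g b * τ h c) ∂μ ∂μ)
      atTop (𝓝 (0 : H)) := by
  have : μ.IsMulRightInvariant := by
    refine ⟨fun g => ?_⟩
    refine Measure.ext fun V hV => ?_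
    rw [Measure.map_apply (measurable_mul_const g) hV]
    rw [← hRight V g⁻¹ hV]
    congr 1
    ext x
    simp [Set.mem_mul, mul_inv_eq_iff_eq_mul]
  have S : Sys ω τ j U :=
    { pos := hω_pos, one := hω_one, tr := hω_tracial, τone := hτ_one, τmul := hτ_mul,
      inv := hω_inv, meas := hτ_meas, dense := hj_dense, inn := hj_inner, hU := hU }
  obtain ⟨Λ, -, hΛfin, -, hΛerg⟩ := hErg
  have hinv := S.hinv hΛfin hΛerg
  have hL1 : Fol μ Λ1 := ⟨Eventually.of_forall hΛ1meas, hΛ1fin, hΛ1folner⟩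
  have hL2 : Fol μ Λ2 := ⟨Eventually.of_forall hΛ2meas, hΛ2fin, hΛ2folner⟩
  have hL1' : Fol μ (fun n => (Λ1 n)⁻¹ * Λ1 n) := by
    refine ⟨?_, hΛ1invfin, hΛ1invfolner⟩
    obtain ⟨c, -, hc⟩ := hΛ1temp
    exact hc.mono fun n hn => hn.1
  have hL2' : Fol μ (fun n => (Λ2 n)⁻¹ * Λ2 n) := by
    refine ⟨?_, hΛ2invfin, hΛ2invfolner⟩
    obtain ⟨c, -, hc⟩ := hΛ2temp
    exact hc.mono fun n hn => hn.1
  refine (S.main hinv hmeas6 hL1 hL2 hL1' hL2' hΛ1temp hΛ2unif hΛ2temp a b c hflight).congr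
    fun n => ?_
  simp only [av]
  rw [integral_smul, smul_smul, mul_inv]
end
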